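/- arXiv:2108.05474 — 6 statements merged into one kernel-verified Lean document; each statement's English description precedes it below -/
import Mathlib

section
/- For every ε > 0 there exists δ > 0 such that the following holds for all sufficiently large k: setting r = ⌊(1+δ)k⌋, for every n < (1/2 − ε)k², no word σ ∈ [r]^n is a k-superpattern. -/
/-- A word `σ ∈ [r]^n` contains a permutation `τ ∈ S_k` as a pattern. -/
def ContainsPattern {n r k : ℕ} (σ : Fin n → Fin r) (τ : Equiv.Perm (Fin k)) : Prop :=
  ∃ i : Fin k → Fin n, StrictMono i ∧ ∀ j j' : Fin k, σ (i j) < σ (i j') ↔ τ j < τ j'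

/-- A word `σ ∈ [r]^n` is a `k`-superpattern. -/
def IsSuperpattern {n r : ℕ} (k : ℕ) (σ : Fin n → Fin r) : Prop :=
  ∀ τ : Equiv.Perm (Fin k), ContainsPattern σ τ

/-- `w` is a subsequence of `g` restricted to positions `[a, b)`. -/
def EmbIn {r : ℕ} (g : ℕ → Fin r) (a b L : ℕ) (w : Fin L → Fin r) : Prop :=
  ∃ f : Fin L → ℕ, StrictMono f ∧ (∀ i, a ≤ f i ∧ f i < b) ∧ ∀ i, g (f i) = w i

lemma sum_antitone_le (F : ℕ → ℝ) (hF : Antitone F) (T : Finset ℕ) :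
    ∑ t ∈ T, F t ≤ ∑ j ∈ Finset.range T.card, F j := by
  induction T using Finset.induction_on_max with
  | empty => simp
  | insert a s hs ih =>
    have ha : a ∉ s := fun h => lt_irrefl _ (hs a h)
    rw [Finset.sum_insert ha, Finset.card_insert_of_notMem ha, Finset.sum_range_succ]
    have hc : s.card ≤ a := by
      have : s ⊆ Finset.range a := fun x hx => Finset.mem_range.2 (hs x hx)
      simpa using Finset.card_le_card this
    have := hF hc
    linarith

open Classical in
lemma card_embIn_le {r : ℕ} (g : ℕ → Fin r) (b : ℕ) (t : ℝ) (ht : 0 ≤ t) (L : ℕ) :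
    ∀ a : ℕ, a ≤ b →
    ((Finset.univ.filter (fun w : Fin L → Fin r => EmbIn g a b L w)).card : ℝ) ≤
      Real.exp (t * ((b : ℝ) - a)) *
        (∑ j ∈ Finset.range r, Real.exp (-t * ((j : ℝ) + 1))) ^ L := by
  induction L with
  | zero =>
    intro a hab
    have h1 : ((Finset.univ.filter (fun w : Fin 0 → Fin r => EmbIn g a b 0 w)).card : ℝ) ≤ 1 := by
      have := Finset.card_le_univ (Finset.univ.filter (fun w : Fin 0 → Fin r => EmbIn g a b 0 w))
      simp only [Fintype.card_unique] at this
      exact_mod_cast this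
    have h2 : (0 : ℝ) ≤ (b : ℝ) - a := sub_nonneg.2 (by exact_mod_cast hab)
    have h3 := Real.one_le_exp (mul_nonneg ht h2)
    rw [pow_zero, mul_one]
    exact h1.trans h3
  | succ L ih =>
    intro a hab
    set Q := ∑ j ∈ Finset.range r, Real.exp (-t * ((j : ℝ) + 1)) with hQ
    set X := Finset.univ.filter (fun x : Fin r => ∃ p, a ≤ p ∧ p < b ∧ g p = x) with hX
    have hW : ∀ x : Fin r, ∃ p, x ∈ X →
        (a ≤ p ∧ p < b ∧ g p = x ∧ ∀ q, a ≤ q → q < b → g q = x → p ≤ q) := by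
      intro x
      by_cases hx : x ∈ X
      · have h : ∃ p, a ≤ p ∧ p < b ∧ g p = x := by simpa [hX] using hx
        refine ⟨Nat.find h, fun _ => ⟨(Nat.find_spec h).1, (Nat.find_spec h).2.1,
          (Nat.find_spec h).2.2, fun q h1 h2 h3 => Nat.find_min' h ⟨h1, h2, h3⟩⟩⟩
      · exact ⟨0, fun h => absurd h hx⟩
    choose W hW using hW
    have hsub : Finset.univ.filter (fun w : Fin (L+1) → Fin r => EmbIn g a b (L+1) w) ⊆
        X.biUnion (fun x => (Finset.univ.filter
          (fun w : Fin L → Fin r => EmbIn g (W x + 1) b L w)).image (fun w => Fin.cons x w)) := by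
      intro w hw
      simp only [Finset.mem_filter, Finset.mem_univ, true_and] at hw
      obtain ⟨f, hf, hr, he⟩ := hw
      have hx : w 0 ∈ X := by
        simp only [hX, Finset.mem_filter, Finset.mem_univ, true_and]
        exact ⟨f 0, (hr 0).1, (hr 0).2, he 0⟩
      rw [Finset.mem_biUnion]
      refine ⟨w 0, hx, ?_⟩
      rw [Finset.mem_image]
      refine ⟨Fin.tail w, ?_, Fin.cons_self_tail w⟩
      simp only [Finset.mem_filter, Finset.mem_univ, true_and]
      refine ⟨fun i => f i.succ, fun i j hij => hf (Fin.succ_lt_succ_iff.2 hij), ?_, ?_⟩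
      · intro i
        refine ⟨?_, (hr _).2⟩
        have h1 := (hW _ hx).2.2.2 (f 0) (hr 0).1 (hr 0).2 (he 0)
        have h2 := hf (Fin.succ_pos i)
        show W (w 0) + 1 ≤ f i.succ
        omega
      · intro i
        exact he i.succ
    have hQ0 : 0 ≤ Q := Finset.sum_nonneg (fun _ _ => (Real.exp_pos _).le)
    have hcard : ((Finset.univ.filter
        (fun w : Fin (L+1) → Fin r => EmbIn g a b (L+1) w)).card : ℝ) ≤
        ∑ x ∈ X, Real.exp (t * ((b : ℝ) - ((W x + 1 : ℕ) : ℝ))) * Q ^ L := by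
      calc _ ≤ ((∑ x ∈ X, (Finset.univ.filter
          (fun w : Fin L → Fin r => EmbIn g (W x + 1) b L w)).card : ℕ) : ℝ) := by
            exact_mod_cast (Finset.card_le_card hsub).trans (Finset.card_biUnion_le.trans
              (Finset.sum_le_sum fun x _ => Finset.card_image_le))
        _ ≤ _ := by
            push_cast
            refine Finset.sum_le_sum fun x hx => ?_
            have := ih (W x + 1) (hW x hx).2.1
            push_cast at this
            exact this
    refine hcard.trans ?_
    rw [← Finset.sum_mul]
    have hinj : Set.InjOn (fun x => W x - a) (X : Set (Fin r)) := by
      intro x hx y hy hxy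
      have h1 := hW x hx
      have h2 := hW y hy
      simp only at hxy
      have : W x = W y := by omega
      rw [← h1.2.2.1, ← h2.2.2.1, this]
    have hsum : ∑ x ∈ X, Real.exp (-t * (((W x - a : ℕ) : ℝ) + 1)) ≤ Q := by
      have hF : Antitone (fun j : ℕ => Real.exp (-t * ((j : ℝ) + 1))) := by
        intro i j hij
        have : (i : ℝ) ≤ j := by exact_mod_cast hij
        apply Real.exp_le_exp.2
        nlinarith
      have h1 := sum_antitone_le _ hF (X.image (fun x => W x - a))
      rw [Finset.sum_image hinj] at h1
      refine h1.trans ?_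
      apply Finset.sum_le_sum_of_subset_of_nonneg
      · apply Finset.range_subset_range.2
        have h2 := Finset.card_le_univ X
        simp only [Fintype.card_fin] at h2
        exact Finset.card_image_le.trans h2
      · intros; exact (Real.exp_pos _).le
    have hexp : ∑ x ∈ X, Real.exp (t * ((b : ℝ) - ((W x + 1 : ℕ) : ℝ))) =
        Real.exp (t * ((b : ℝ) - a)) * ∑ x ∈ X, Real.exp (-t * (((W x - a : ℕ) : ℝ) + 1)) := by
      rw [Finset.mul_sum]
      refine Finset.sum_congr rfl fun x hx => ?_
      rw [← Real.exp_add, Nat.cast_sub (hW x hx).1]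
      congr 1
      push_cast
      ring
    rw [hexp, pow_succ', mul_assoc]
    gcongr

lemma exists_short_block {k n : ℕ} (f : Fin k → Fin n) (hf : StrictMono f) (m L : ℕ)
    (hm : 0 < m) (hL : 0 < L) (hmL : m * L ≤ k) :
    ∃ (c : ℕ) (_ : c < m) (h1 : c * L < k) (h2 : c * L + L - 1 < k),
      (f ⟨c * L + L - 1, h2⟩ : ℕ) < (f ⟨c * L, h1⟩ : ℕ) + n / m := by
  by_contra hcon
  push Not at hcon
  have key : ∀ c, c < m → ∀ h : c * L + L - 1 < k,
      (c + 1) * (n / m + 1) ≤ (f ⟨c * L + L - 1, h⟩ : ℕ) + 1 := by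
    intro c
    induction c with
    | zero =>
      intro hc h
      have := hcon 0 hc (by omega) h
      omega
    | succ c ih =>
      intro hc h
      have e : (c + 1) * L = c * L + L := by ring
      have h1 : (c + 1) * L < k := by omega
      have h0 := ih (by omega) (by omega)
      have h2 := hcon (c + 1) hc h1 h
      have h3 : f ⟨c * L + L - 1, by omega⟩ < f ⟨(c + 1) * L, h1⟩ := by
        apply hf
        simp only [Fin.mk_lt_mk]
        omega
      have h4 : (f ⟨c * L + L - 1, by omega⟩ : ℕ) < f ⟨(c + 1) * L, h1⟩ := h3
      have e2 : (c + 1 + 1) * (n / m + 1) = (c + 1) * (n / m + 1) + (n / m + 1) := by ring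
      omega
  have e : (m - 1) * L + L = m * L := by
    obtain ⟨m, rfl⟩ : ∃ m', m = m' + 1 := ⟨m - 1, by omega⟩
    simp; ring
  have hlt : (m - 1) * L + L - 1 < k := by omega
  have h1 := key (m - 1) (by omega) hlt
  have h2 := (f ⟨(m - 1) * L + L - 1, hlt⟩).2
  rw [Nat.sub_add_cancel hm] at h1
  have h3 := Nat.lt_mul_div_succ n hm
  omega

open Classical in
lemma card_fiber_le {k L : ℕ} (e : Fin L → Fin k) (he : Function.Injective e)
    (v : Fin L → Fin k) :
    (Finset.univ.filter (fun τ : Equiv.Perm (Fin k) => ∀ i, τ (e i) = v i)).card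
      ≤ (k - L).factorial := by
  by_cases hne : ∃ τ0 : Equiv.Perm (Fin k), ∀ i, τ0 (e i) = v i
  · obtain ⟨τ0, h0⟩ := hne
    let p : Fin k → Prop := fun x => x ∉ Set.range e
    have hc : Fintype.card {f : Equiv.Perm (Fin k) // ∀ a, ¬ p a → f a = a}
        = (k - L).factorial := by
      rw [← Fintype.card_congr (Equiv.Perm.subtypeEquivSubtypePerm p), Fintype.card_perm]
      congr 1
      rw [Fintype.card_subtype_compl]
      rw [Fintype.card_fin]
      congr 1
      have := Set.card_range_of_injective he
      rw [Fintype.card_fin] at this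
      convert this
    rw [← hc, Fintype.card_subtype]
    apply Finset.card_le_card_of_injOn (fun τ => τ0⁻¹ * τ)
    · intro τ hτ
      simp only [Finset.coe_filter, Finset.mem_univ, true_and, Set.mem_ofPred_eq] at hτ ⊢
      intro a ha
      simp only [p, not_not] at ha
      obtain ⟨i, rfl⟩ := ha
      rw [Equiv.Perm.mul_apply, hτ i, ← h0 i]
      simp
    · intro τ _ τ' _ h
      exact mul_left_cancel h
  · rw [Finset.filter_false_of_mem]
    · simp
    · intro τ _ h
      exact hne ⟨τ, h⟩

open Classical in
lemma card_strictMono_le (k r : ℕ) :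
    (Finset.univ.filter (fun s : Fin k → Fin r => StrictMono s)).card ≤ r.choose k := by
  have : (Finset.powersetCard k (Finset.univ : Finset (Fin r))).card = r.choose k := by simp
  rw [← this]
  apply Finset.card_le_card_of_injOn (fun s => Finset.univ.image s)
  · intro s hs
    simp only [Finset.coe_filter, Finset.mem_univ, true_and, Set.mem_ofPred_eq] at hs
    simp only [Finset.mem_coe, Finset.mem_powersetCard]
    refine ⟨Finset.subset_univ _, ?_⟩
    rw [Finset.card_image_of_injective _ hs.injective]
    simp
  · intro s hs s' hs' h
    simp only [Finset.coe_filter, Finset.mem_univ, true_and, Set.mem_ofPred_eq] at hs hs'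
    apply (StrictMono.range_inj hs hs').1
    have h2 := congrArg (fun S : Finset (Fin r) => (S : Set (Fin r))) h
    simpa using h2

open Classical in
lemma factorial_le_of_superpattern {k n r : ℕ} (σ : Fin n → Fin r) (hσ : IsSuperpattern k σ)
    (g : ℕ → Fin r) (hg : ∀ i : Fin n, g i = σ i) (m L : ℕ)
    (hm : 0 < m) (hL : 0 < L) (hmL : m * L ≤ k) (B : ℝ)
    (hB : ∀ a, ((Finset.univ.filter
      (fun w : Fin L → Fin r => EmbIn g a (a + n / m) L w)).card : ℝ) ≤ B) :
    (k.factorial : ℝ) ≤ m * n * (r.choose k) * B * (k - L).factorial := by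
  have hk : 0 < k := lt_of_lt_of_le (Nat.mul_pos hm hL) hmL
  let e : ℕ → Fin L → Fin k := fun c i => if h : c * L + i < k then ⟨c * L + i, h⟩ else ⟨0, hk⟩
  have hblk : ∀ c < m, ∀ i : Fin L, c * L + i < k := by
    intro c hc i
    have h1 : (c + 1) * L ≤ m * L := Nat.mul_le_mul_right L hc
    have h2 : (c + 1) * L = c * L + L := by ring
    have := i.2
    omega
  have he : ∀ (c : ℕ) (hc : c < m) (i : Fin L), e c i = ⟨c * L + i, hblk c hc i⟩ := by
    intro c hc i
    simp only [e]
    rw [dif_pos (hblk c hc i)]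
  let P : Finset ((ℕ × ℕ) × (Fin k → Fin r)) :=
    (Finset.range m ×ˢ Finset.range n) ×ˢ
      Finset.univ.filter (fun s : Fin k → Fin r => StrictMono s)
  let A : (ℕ × ℕ) × (Fin k → Fin r) → Finset (Equiv.Perm (Fin k)) := fun q =>
    Finset.univ.filter (fun τ => EmbIn g q.1.2 (q.1.2 + n / m) L (fun i => q.2 (τ (e q.1.1 i))))
  have hcover : (Finset.univ : Finset (Equiv.Perm (Fin k))) ⊆ P.biUnion A := by
    intro τ _
    obtain ⟨f, hf, hτ⟩ := hσ τ
    obtain ⟨c, hc, h1, h2, h3⟩ := exists_short_block f hf m L hm hL hmL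
    rw [Finset.mem_biUnion]
    refine ⟨((c, (f ⟨c * L, h1⟩ : ℕ)), fun v => σ (f (τ⁻¹ v))), ?_, ?_⟩
    · simp only [P, Finset.mem_product, Finset.mem_range, Finset.mem_filter, Finset.mem_univ,
        true_and]
      refine ⟨⟨hc, Fin.is_lt _⟩, ?_⟩
      intro v v' hv
      apply (hτ _ _).2
      simpa using hv
    · simp only [A, Finset.mem_filter, Finset.mem_univ, true_and]
      refine ⟨fun i => (f (e c i) : ℕ), ?_, ?_, ?_⟩
      · intro i j hij
        apply hf
        rw [he c hc, he c hc]
        simp only [Fin.mk_lt_mk]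
        have : (i : ℕ) < j := hij
        omega
      · intro i
        beta_reduce
        rw [he c hc]
        constructor
        · apply hf.monotone
          simp
        · refine lt_of_le_of_lt ?_ h3
          apply hf.monotone
          simp only [Fin.mk_le_mk]
          have := i.2
          omega
      · intro i
        rw [hg]
        simp
  have hA : ∀ q ∈ P, ((A q).card : ℝ) ≤ B * (k - L).factorial := by
    rintro ⟨⟨c, a⟩, s⟩ hq
    simp only [P, Finset.mem_product, Finset.mem_range, Finset.mem_filter, Finset.mem_univ,
        true_and] at hq
    obtain ⟨⟨hc, ha⟩, hs⟩ := hq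
    have hinj : Function.Injective (e c) := by
      intro i j hij
      rw [he c hc, he c hc] at hij
      simp only [Fin.mk.injEq] at hij
      ext
      omega
    have h1 := Finset.card_le_mul_card_image_of_maps_to
      (f := fun τ : Equiv.Perm (Fin k) => (fun i => s (τ (e c i)) : Fin L → Fin r))
      (s := A ((c, a), s))
      (t := Finset.univ.filter (fun w : Fin L → Fin r => EmbIn g a (a + n / m) L w))
      (by
        intro τ hτ
        simpa [A] using hτ) ((k - L).factorial) (by
        intro w _
        by_cases hne : ∃ τ0 : Equiv.Perm (Fin k), (fun i => s (τ0 (e c i))) = w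
        · obtain ⟨τ0, h0⟩ := hne
          refine (Finset.card_le_card ?_).trans (card_fiber_le (e c) hinj (fun i => τ0 (e c i)))
          intro τ hτ
          simp only [Finset.mem_filter, Finset.mem_univ, true_and] at hτ ⊢
          intro i
          apply hs.injective
          have := hτ.2
          rw [← h0] at this
          exact congrFun this i
        · rw [Finset.filter_false_of_mem]
          · simp
          · intro τ _ h
            exact hne ⟨τ, h⟩)
    have h2 : ((A ((c, a), s)).card : ℝ) ≤ (k - L).factorial * (Finset.univ.filter
      (fun w : Fin L → Fin r => EmbIn g a (a + n / m) L w)).card := by exact_mod_cast h1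
    refine h2.trans ?_
    rw [mul_comm]
    gcongr
    exact hB a
  have hB0 : 0 ≤ B := le_trans (Nat.cast_nonneg _) (hB 0)
  have hP : (P.card : ℝ) ≤ m * n * r.choose k := by
    have : P.card ≤ m * n * r.choose k := by
      simp only [P, Finset.card_product, Finset.card_range]
      exact Nat.mul_le_mul_left _ (card_strictMono_le k r)
    exact_mod_cast this
  have h1 := Finset.card_le_card hcover
  rw [Finset.card_univ, Fintype.card_perm, Fintype.card_fin] at h1
  have h2 : (k.factorial : ℝ) ≤ ∑ q ∈ P, ((A q).card : ℝ) := by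
    exact_mod_cast h1.trans Finset.card_biUnion_le
  calc (k.factorial : ℝ) ≤ ∑ q ∈ P, ((A q).card : ℝ) := h2
    _ ≤ ∑ q ∈ P, B * (k - L).factorial := Finset.sum_le_sum hA
    _ = P.card * (B * (k - L).factorial) := by rw [Finset.sum_const, nsmul_eq_mul]
    _ ≤ (m * n * r.choose k) * (B * (k - L).factorial) := by gcongr
    _ = _ := by ring

lemma choose_le_exp (κ : ℝ) (hκ : 0 < κ) : ∃ δ0 : ℝ, 0 < δ0 ∧ ∀ δ : ℝ, 0 < δ → δ ≤ δ0 →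
    ∀ k r : ℕ, k ≤ r → (r : ℝ) ≤ (1 + δ) * k → (r.choose k : ℝ) ≤ Real.exp (κ * k) := by
  set x := κ / 4 with hx
  have hx0 : 0 < x := by positivity
  set A := |Real.log x| + 1 with hA
  have hA0 : 0 < A := by positivity
  refine ⟨min 1 (κ / (2 * A)), by positivity, ?_⟩
  intro δ hδ hδ0 k r hkr hr
  have hδ1 : δ ≤ 1 := hδ0.trans (min_le_left _ _)
  have hδ2 : δ * (2 * A) ≤ κ := (le_div_iff₀ (by positivity)).1 (hδ0.trans (min_le_right _ _))
  have hk0 : (0 : ℝ) ≤ k := Nat.cast_nonneg k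
  have h1 : x ^ (r - k) * (r.choose k : ℝ) ≤ (1 + x) ^ r := by
    rw [add_pow]
    have := Finset.single_le_sum (f := fun i => (1 : ℝ) ^ i * x ^ (r - i) * (r.choose i : ℝ))
      (s := Finset.range (r + 1)) (fun i _ => by positivity)
      (Finset.mem_range.2 (Nat.lt_succ_of_le hkr))
    simpa using this
  have h2 : (1 + x) ^ r ≤ Real.exp (κ / 2 * k) := by
    calc (1 + x) ^ r ≤ (Real.exp x) ^ r := by
          gcongr
          linarith [Real.add_one_le_exp x]
      _ = Real.exp (r * x) := by rw [← Real.exp_nat_mul]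
      _ ≤ _ := by
          apply Real.exp_le_exp.2
          have : (r : ℝ) ≤ 2 * k := by nlinarith
          rw [hx]
          nlinarith
  have h3 : Real.exp (-(κ / 2 * k)) ≤ x ^ (r - k) := by
    rw [← Real.exp_log (pow_pos hx0 (r - k)), Real.log_pow]
    apply Real.exp_le_exp.2
    rw [Nat.cast_sub hkr]
    have hl : -A ≤ Real.log x := by
      have := neg_abs_le (Real.log x)
      linarith
    have hd : (r : ℝ) - k ≤ δ * k := by linarith
    have hd0 : (0 : ℝ) ≤ (r : ℝ) - k := sub_nonneg.2 (by exact_mod_cast hkr)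
    have a1 : ((r : ℝ) - k) * (-A) ≤ ((r : ℝ) - k) * Real.log x :=
      mul_le_mul_of_nonneg_left hl hd0
    have a2 : ((r : ℝ) - k) * A ≤ δ * k * A := mul_le_mul_of_nonneg_right hd hA0.le
    have a3 : δ * (2 * A) * k ≤ κ * k := mul_le_mul_of_nonneg_right hδ2 hk0
    linarith
  have h4 : Real.exp (-(κ / 2 * k)) * (r.choose k : ℝ) ≤ Real.exp (κ / 2 * k) :=
    (mul_le_mul_of_nonneg_right h3 (Nat.cast_nonneg _)).trans (h1.trans h2)
  rw [Real.exp_neg, inv_mul_le_iff₀ (Real.exp_pos _), ← Real.exp_add] at h4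
  refine h4.trans (le_of_eq ?_)
  congr 1
  ring

lemma sum_exp_le (θ δ : ℝ) (hθ : 0 < θ) (k r : ℕ) (hk : 0 < k) (hkr : k ≤ r)
    (hr : (r : ℝ) ≤ (1 + δ) * k) :
    ∑ j ∈ Finset.range r, Real.exp (-(θ / k) * ((j : ℝ) + 1)) ≤
      k * Real.exp (-θ / 2 + θ ^ 2 / 2 + δ) := by
  have hk0 : (0 : ℝ) < k := by exact_mod_cast hk
  have hquad : ∀ x : ℝ, 0 ≤ x → Real.exp (-x) ≤ 1 - x + x ^ 2 / 2 := by
    intro x hx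
    have h1 := Real.quadratic_le_exp_of_nonneg hx
    rw [Real.exp_neg, inv_le_iff_one_le_mul₀ (Real.exp_pos _)]
    have h2 : 0 < 1 - x + x ^ 2 / 2 := by nlinarith [sq_nonneg (x - 1)]
    have h3 := mul_le_mul_of_nonneg_left h1 h2.le
    nlinarith [sq_nonneg (x ^ 2)]
  have hsplit : ∑ j ∈ Finset.range r, Real.exp (-(θ / k) * ((j : ℝ) + 1)) =
      ∑ j ∈ Finset.range k, Real.exp (-(θ / k) * ((j : ℝ) + 1)) +
      ∑ j ∈ Finset.Ico k r, Real.exp (-(θ / k) * ((j : ℝ) + 1)) :=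
    (Finset.sum_range_add_sum_Ico _ hkr).symm
  have h2 : ∑ j ∈ Finset.Ico k r, Real.exp (-(θ / k) * ((j : ℝ) + 1)) ≤ δ * k := by
    calc _ ≤ ∑ j ∈ Finset.Ico k r, (1 : ℝ) := by
          refine Finset.sum_le_sum fun j _ => ?_
          apply Real.exp_le_one_iff.2
          have : 0 ≤ (θ / k) * ((j : ℝ) + 1) := by positivity
          linarith
      _ = (r : ℝ) - k := by simp [Nat.cast_sub hkr]
      _ ≤ _ := by linarith
  have hg : ∑ j ∈ Finset.range k, ((j : ℝ) + 1) = k * (k + 1) / 2 := by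
    clear hsplit h2 hr hkr hk hk0
    induction k with
    | zero => simp
    | succ k ih => rw [Finset.sum_range_succ, ih]; push_cast; ring
  have h1 : ∑ j ∈ Finset.range k, Real.exp (-(θ / k) * ((j : ℝ) + 1)) ≤
      k * (1 - θ / 2 + θ ^ 2 / 2) := by
    calc _ ≤ ∑ j ∈ Finset.range k, (1 - (θ / k) * ((j : ℝ) + 1) + θ ^ 2 / 2) := by
          refine Finset.sum_le_sum fun j hj => ?_
          have hx0 : 0 ≤ (θ / k) * ((j : ℝ) + 1) := by positivity
          have hj' : (j : ℝ) + 1 ≤ k := by exact_mod_cast Finset.mem_range.1 hj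
          have hx1 : (θ / k) * ((j : ℝ) + 1) ≤ θ := by
            rw [div_mul_eq_mul_div, div_le_iff₀ hk0]
            exact mul_le_mul_of_nonneg_left hj' hθ.le
          have := hquad _ hx0
          rw [← neg_mul] at this
          have h5 : ((θ / k) * ((j : ℝ) + 1)) ^ 2 ≤ θ ^ 2 := by gcongr
          linarith
      _ = k - (θ / k) * (k * (k + 1) / 2) + k * (θ ^ 2 / 2) := by
          rw [Finset.sum_add_distrib, Finset.sum_sub_distrib, ← Finset.mul_sum, hg]
          simp
      _ ≤ _ := by
          have : (θ / k) * (k * (k + 1) / 2) = θ * (k + 1) / 2 := by field_simp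
          rw [this]
          nlinarith
  rw [hsplit]
  have h3 := Real.add_one_le_exp (-θ / 2 + θ ^ 2 / 2 + δ)
  have h4 := mul_le_mul_of_nonneg_left h3 hk0.le
  nlinarith

lemma eventually_small (C c : ℝ) (hc : 0 < c) :
    ∃ K : ℕ, ∀ k : ℕ, K ≤ k → C * (k : ℝ) ^ 2 * Real.exp (-(c * k)) < 1 := by
  have h := tendsto_pow_const_mul_const_pow_of_lt_one 2 (Real.exp_pos (-c)).le
    (Real.exp_lt_one_iff.2 (by linarith))
  have h2 := h.const_mul C
  rw [mul_zero] at h2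
  obtain ⟨K, hK⟩ := Filter.eventually_atTop.1 (h2.eventually (gt_mem_nhds one_pos))
  refine ⟨K, fun k hk => ?_⟩
  have := hK k hk
  rw [← Real.exp_nat_mul] at this
  refine lt_of_eq_of_lt ?_ this
  rw [mul_assoc, show (k : ℝ) * -c = -(c * k) by ring]

set_option maxHeartbeats 2000000 in
/-- For every `ε > 0` there exists `δ > 0` such that for all sufficiently large `k`:
with `r = ⌊(1+δ)k⌋`, for every `n < (1/2 − ε)k²`, no word `σ ∈ [r]^n` is a
`k`-superpattern. -/
theorem no_short_superpattern_on_small_alphabet :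
    ∀ ε : ℝ, 0 < ε → ∃ δ : ℝ, 0 < δ ∧ ∃ K : ℕ, ∀ k : ℕ, K ≤ k →
      ∀ n : ℕ, (n : ℝ) < (1/2 - ε) * (k : ℝ)^2 →
        ∀ σ : Fin n → Fin (⌊(1 + δ) * (k : ℝ)⌋₊), ¬ IsSuperpattern k σ := by
  intro ε hε
  obtain ⟨m, hm⟩ := exists_nat_ge (8 / ε ^ 2 + 2)
  have hm2 : (2 : ℝ) ≤ m := by
    have : 0 < 8 / ε ^ 2 := by positivity
    linarith
  have hm0 : (0 : ℝ) < m := by linarith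
  have hmN : 0 < m := by exact_mod_cast hm0
  have hm8 : 2 / (m : ℝ) ≤ ε ^ 2 / 4 := by
    have h1 : 8 / ε ^ 2 ≤ m := by linarith
    rw [div_le_iff₀ (by positivity)] at h1
    rw [div_le_iff₀ hm0]
    linarith
  set κ := ε ^ 2 / (16 * m) with hκ
  have hκ0 : 0 < κ := by positivity
  obtain ⟨δ0, hδ0, hch⟩ := choose_le_exp κ hκ0
  obtain ⟨K, hK⟩ := eventually_small (m * Real.exp (ε + ε ^ 2 / 8)) κ hκ0
  set δ := min δ0 (ε ^ 2 / 8) with hδ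
  have hδpos : 0 < δ := by positivity
  have hδ8 : δ ≤ ε ^ 2 / 8 := min_le_right _ _
  refine ⟨δ, hδpos, max K m, ?_⟩
  intro k hk n hn
  have hKk := hK k ((le_max_left _ _).trans hk)
  have hmk : m ≤ k := (le_max_right _ _).trans hk
  have hkN : 0 < k := lt_of_lt_of_le hmN hmk
  have hk0 : (0 : ℝ) < k := by exact_mod_cast hkN
  set r := ⌊(1 + δ) * (k : ℝ)⌋₊ with hr
  intro σ hσ
  have hrle : (r : ℝ) ≤ (1 + δ) * k := Nat.floor_le (by positivity)
  have hkr : k ≤ r := Nat.le_floor (by nlinarith)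
  have hr0 : 0 < r := lt_of_lt_of_le hkN hkr
  set L := k / m with hL
  have hL0 : 0 < L := Nat.div_pos hmk hmN
  have hmL : m * L ≤ k := Nat.mul_div_le k m
  have hLk : L ≤ k := Nat.div_le_self k m
  have hLle : (L : ℝ) ≤ k / m := by
    rw [le_div_iff₀ hm0, mul_comm]; exact_mod_cast hmL
  have hLge : (k : ℝ) / m ≤ L + 1 := by
    rw [div_le_iff₀ hm0, mul_comm]
    exact_mod_cast (Nat.lt_mul_div_succ k hmN).le
  let g : ℕ → Fin r := fun p => if h : p < n then σ ⟨p, h⟩ else ⟨0, hr0⟩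
  have hg : ∀ i : Fin n, g i = σ i := by
    intro i
    simp [g]
  have ht : 0 ≤ ε / (k : ℝ) := by positivity
  set Q := ∑ j ∈ Finset.range r, Real.exp (-(ε / k) * ((j : ℝ) + 1)) with hQ
  have hQ0 : 0 ≤ Q := Finset.sum_nonneg (fun _ _ => (Real.exp_pos _).le)
  have hQle : Q ≤ k * Real.exp (-ε / 2 + ε ^ 2 / 2 + δ) := sum_exp_le ε δ hε k r hkN hkr hrle
  have hmain := factorial_le_of_superpattern σ hσ g hg m L hmN hL0 hmL
    (Real.exp (ε / k * ((n / m : ℕ) : ℝ)) * Q ^ L) (by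
      intro a
      have := card_embIn_le g (a + n / m) (ε / k) ht L a (Nat.le_add_right _ _)
      refine this.trans (le_of_eq ?_)
      congr 2
      push_cast
      ring)
  have hfac : (k.factorial : ℝ) = (k - L).factorial * (k.descFactorial L : ℝ) := by
    exact_mod_cast (Nat.factorial_mul_descFactorial hLk).symm
  have hfpos : (0 : ℝ) < (k - L).factorial := by exact_mod_cast Nat.factorial_pos _
  rw [hfac, mul_comm] at hmain
  have hdesc := le_of_mul_le_mul_right hmain hfpos
  -- lower bound on the falling factorial
  have hlow : (k : ℝ) ^ L * Real.exp (-(2 / m) * L) ≤ k.descFactorial L := by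
    have h1 : ((k + 1 - L : ℕ) : ℝ) ^ L ≤ k.descFactorial L := by
      exact_mod_cast Nat.pow_sub_le_descFactorial k L
    have h2 : (k : ℝ) * Real.exp (-(2 / m)) ≤ ((k + 1 - L : ℕ) : ℝ) := by
      rw [Nat.cast_sub (by omega)]
      push_cast
      have hy : (1 : ℝ) / m ≤ 1 / 2 := by
        apply one_div_le_one_div_of_le <;> linarith
      have hy0 : (0 : ℝ) < 1 / m := by positivity
      have h3 : Real.exp (-(2 / m)) ≤ 1 - 1 / (m : ℝ) := by
        rw [Real.exp_neg, inv_le_iff_one_le_mul₀ (Real.exp_pos _)]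
        have h4 := Real.add_one_le_exp (2 / (m : ℝ))
        have h5 : (2 : ℝ) / m = 2 * (1 / m) := by ring
        rw [h5] at h4 ⊢
        nlinarith
      have h6 := mul_le_mul_of_nonneg_left h3 hk0.le
      have h7 : (k : ℝ) * (1 - 1 / m) = k - k / m := by ring
      linarith
    calc (k : ℝ) ^ L * Real.exp (-(2 / m) * L) = (k * Real.exp (-(2 / m))) ^ L := by
          rw [mul_pow, ← Real.exp_nat_mul]
          congr 2
          ring
      _ ≤ ((k + 1 - L : ℕ) : ℝ) ^ L := by gcongr
      _ ≤ _ := h1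
  have hQpow : Q ^ L ≤ (k : ℝ) ^ L * Real.exp ((-ε / 2 + ε ^ 2 / 2 + δ) * L) := by
    calc Q ^ L ≤ (k * Real.exp (-ε / 2 + ε ^ 2 / 2 + δ)) ^ L := by gcongr
      _ = _ := by
          rw [mul_pow, ← Real.exp_nat_mul]
          congr 2
          ring
  have hhalf : 0 < 1 / 2 - ε := by
    by_contra hcon
    push Not at hcon
    have : (1 / 2 - ε) * (k : ℝ) ^ 2 ≤ 0 := mul_nonpos_of_nonpos_of_nonneg hcon (by positivity)
    have := Nat.cast_nonneg (α := ℝ) n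
    linarith
  have hexpN : Real.exp (ε / k * ((n / m : ℕ) : ℝ)) ≤
      Real.exp (ε * (1 / 2 - ε) * (L : ℝ) + ε) := by
    apply Real.exp_le_exp.2
    have h1 : ((n / m : ℕ) : ℝ) ≤ (n : ℝ) / m := Nat.cast_div_le
    have h2 : (n : ℝ) / m ≤ (1 / 2 - ε) * (k : ℝ) ^ 2 / m := by gcongr
    calc ε / k * ((n / m : ℕ) : ℝ) ≤ ε / k * ((1 / 2 - ε) * (k : ℝ) ^ 2 / m) :=
          mul_le_mul_of_nonneg_left (h1.trans h2) ht
      _ = ε * (1 / 2 - ε) * (k / m) := by field_simp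
      _ ≤ ε * (1 / 2 - ε) * (L + 1) := by gcongr
      _ ≤ _ := by nlinarith
  have hnk : (n : ℝ) ≤ (k : ℝ) ^ 2 := by nlinarith [sq_nonneg (k : ℝ)]
  have hchk := hch δ hδpos (min_le_left _ _) k r hkr hrle
  have hall : (k : ℝ) ^ L * Real.exp (-(2 / m) * L) ≤
      m * (k : ℝ) ^ 2 * Real.exp (κ * k) * (Real.exp (ε * (1 / 2 - ε) * (L : ℝ) + ε) *
        ((k : ℝ) ^ L * Real.exp ((-ε / 2 + ε ^ 2 / 2 + δ) * L))) := by
    refine hlow.trans (hdesc.trans ?_)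
    gcongr
  have hkL : (0 : ℝ) < (k : ℝ) ^ L := by positivity
  have hall2 : Real.exp (-(2 / m) * L) ≤ m * (k : ℝ) ^ 2 *
      Real.exp (κ * k + (ε * (1 / 2 - ε) * (L : ℝ) + ε) + (-ε / 2 + ε ^ 2 / 2 + δ) * L) := by
    refine le_of_mul_le_mul_left ?_ hkL
    refine hall.trans (le_of_eq ?_)
    rw [Real.exp_add (κ * k + _), Real.exp_add (κ * k)]
    ring
  have hall3 : 1 ≤ m * (k : ℝ) ^ 2 *
      Real.exp (κ * k + (ε * (1 / 2 - ε) * (L : ℝ) + ε) + (-ε / 2 + ε ^ 2 / 2 + δ) * L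
        + 2 / m * L) := by
    have h := mul_le_mul_of_nonneg_right hall2 (Real.exp_pos (2 / m * (L : ℝ))).le
    rw [← Real.exp_add, mul_assoc, ← Real.exp_add] at h
    rw [show -(2 / (m : ℝ)) * L + 2 / m * L = 0 by ring, Real.exp_zero] at h
    exact h
  have hexpo : κ * k + (ε * (1 / 2 - ε) * (L : ℝ) + ε) + (-ε / 2 + ε ^ 2 / 2 + δ) * L
        + 2 / m * L ≤ (ε + ε ^ 2 / 8) + -(κ * k) := by
    have hLr : (0 : ℝ) ≤ L := Nat.cast_nonneg L
    have h1 : δ * L ≤ ε ^ 2 / 8 * L := mul_le_mul_of_nonneg_right hδ8 hLr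
    have h2 : 2 / m * L ≤ ε ^ 2 / 4 * (L : ℝ) := mul_le_mul_of_nonneg_right hm8 hLr
    have h3 : κ * k = ε ^ 2 / 16 * (k / m) := by rw [hκ]; field_simp
    have h4 : ε ^ 2 / 16 * (k / m) ≤ ε ^ 2 / 16 * (L + 1) := by gcongr
    rw [h3]
    nlinarith
  have hfinal : (1 : ℝ) ≤ m * Real.exp (ε + ε ^ 2 / 8) * (k : ℝ) ^ 2 * Real.exp (-(κ * k)) := by
    calc (1 : ℝ) ≤ _ := hall3
      _ ≤ m * (k : ℝ) ^ 2 * Real.exp ((ε + ε ^ 2 / 8) + -(κ * k)) := by gcongr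
      _ = _ := by rw [Real.exp_add]; ring
  linarith
end

section
/- For every word σ ∈ [k]^n and every permutation τ ∈ S_k, τ is a pattern of σ if and only if c_{A_σ}(0, τ) ≤ n, where τ is read as the word τ(1),…,τ(k) and c_{A_σ} is the cost function of the weighted DFA A_σ. -/
/-- A weighted DFA on the alphabet `[k]` (modelled as `Fin k`) with state type `V`:
a transition function, a root state, and a cost function into `ℕ∞`. -/
structure WDFA (k : ℕ) (V : Type*) where
  trans : V → Fin k → V
  root : V
  cost : V → Fin k → ℕ∞

/-- The final state of the walk from `v` reading the word `w`. -/
def WDFA.walkEnd {k : ℕ} {V : Type*} (D : WDFA k V) : V → List (Fin k) → V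
  | v, [] => v
  | v, t :: w => D.walkEnd (D.trans v t) w

/-- The cost of reading the word `w` starting from state `v`. -/
def WDFA.wordCost {k : ℕ} {V : Type*} (D : WDFA k V) : V → List (Fin k) → ℕ∞
  | _, [] => 0
  | v, t :: w => D.cost v t + D.wordCost (D.trans v t) w

/-- A `k`-DFA: a weighted DFA on alphabet `[k]` in which, at every state `v`, the
costs `c(v, ·)` form a bijection onto `{1, …, k}`. -/
def WDFA.IsKDFA {k : ℕ} {V : Type*} (D : WDFA k V) : Prop :=
  ∀ v : V, ∃ π : Equiv.Perm (Fin k), ∀ t : Fin k, D.cost v t = (((π t : ℕ) + 1 : ℕ) : ℕ∞)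

/-- A permutation `τ ∈ S_k` read as the word `τ(1), …, τ(k)`. -/
def permWord {k : ℕ} (τ : Equiv.Perm (Fin k)) : List (Fin k) :=
  (List.finRange k).map τ

/-- The greedy weighted DFA `A_σ` associated to `σ ∈ [k]^n`: states `{0, 1, …, n}`
(modelled as `Fin (n+1)`), root `0`; reading letter `t` at state `v` jumps to the
least position `> v` where `σ` takes value `t` (costing the distance travelled),
and costs `∞` (staying put) if there is no such position. -/
def greedyDFA {k n : ℕ} (σ : Fin n → Fin k) : WDFA k (Fin (n + 1)) where
  root := 0
  trans v t := WithBot.recBotCoe v (fun u => u.succ)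
    ((Finset.univ.filter fun i : Fin n => (v : ℕ) ≤ (i : ℕ) ∧ σ i = t).min)
  cost v t := WithBot.recBotCoe ⊤ (fun u => (((u : ℕ) + 1 - (v : ℕ) : ℕ) : ℕ∞))
    ((Finset.univ.filter fun i : Fin n => (v : ℕ) ≤ (i : ℕ) ∧ σ i = t).min)

/-- One step of the greedy automaton: either no later occurrence, or the least one. -/
theorem greedy_step {k n : ℕ} (σ : Fin n → Fin k) (v : Fin (n + 1)) (t : Fin k) :
    ((∀ i : Fin n, (v : ℕ) ≤ i → σ i ≠ t) ∧ (greedyDFA σ).cost v t = ⊤) ∨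
    (∃ u : Fin n, (v : ℕ) ≤ u ∧ σ u = t ∧ (∀ i : Fin n, (v : ℕ) ≤ i → σ i = t → u ≤ i) ∧
      (greedyDFA σ).cost v t = (((u : ℕ) + 1 - (v : ℕ) : ℕ) : ℕ∞) ∧
      (greedyDFA σ).trans v t = u.succ) := by
  rcases hS : (Finset.univ.filter fun i : Fin n => (v : ℕ) ≤ (i : ℕ) ∧ σ i = t).min with _ | u
  · left
    refine ⟨fun i hi h => ?_, ?_⟩
    · have h1 := Finset.min_eq_top.mp hS
      have h2 : i ∈ (Finset.univ.filter fun i : Fin n => (v : ℕ) ≤ (i : ℕ) ∧ σ i = t) := by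
        simp [hi, h]
      rw [h1] at h2
      simp at h2
    · simp only [greedyDFA]
      rw [hS]
      rfl
  · right
    have h1 := Finset.mem_of_min hS
    simp only [Finset.mem_filter, Finset.mem_univ, true_and] at h1
    refine ⟨u, h1.1, h1.2, fun i hi h => ?_, ?_, ?_⟩
    · exact Finset.min_le_of_eq (by simp [hi, h]) hS
    · simp only [greedyDFA]
      rw [hS]
      rfl
    · simp only [greedyDFA]
      rw [hS]
      rfl

theorem greedy_cost_iff {k n : ℕ} (σ : Fin n → Fin k) (w : List (Fin k)) :
    ∀ v : Fin (n + 1), (((v : ℕ) : ℕ∞) + (greedyDFA σ).wordCost v w ≤ (n : ℕ∞) ↔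
      ∃ p : List (Fin n), p.map σ = w ∧ p.Pairwise (· < ·) ∧ ∀ x ∈ p, (v : ℕ) ≤ (x : ℕ)) := by
  induction w with
  | nil =>
    intro v
    have := v.is_le
    simp [WDFA.wordCost, this]
  | cons t w ih =>
    intro v
    simp only [WDFA.wordCost]
    rcases greedy_step σ v t with ⟨hno, hc⟩ | ⟨u, hvu, hu, hmin, hc, ht⟩
    · rw [hc]
      constructor
      · intro h
        simp at h
      · rintro ⟨p, hp, -, hv⟩
        obtain ⟨a, q, rfl, ha, -⟩ := List.map_eq_cons_iff.mp hp
        exact absurd ha (hno a (hv a (by simp)))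
    · rw [hc, ht, ← add_assoc, ← Nat.cast_add]
      have e : (v : ℕ) + ((u : ℕ) + 1 - v) = (u.succ : Fin (n + 1)) := by
        rw [Fin.val_succ]; omega
      rw [e, ih]
      constructor
      · rintro ⟨p, hp, hs, hv⟩
        refine ⟨u :: p, by simp [hp, hu], List.pairwise_cons.mpr ⟨fun x hx => ?_, hs⟩, ?_⟩
        · have := hv x hx
          rw [Fin.val_succ] at this
          exact Fin.lt_def.mpr (by omega)
        · intro x hx
          rcases List.mem_cons.mp hx with rfl | hx
          · exact hvu
          · have := hv x hx
            rw [Fin.val_succ] at this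
            omega
      · rintro ⟨p, hp, hs, hv⟩
        obtain ⟨a, q, rfl, ha, hq⟩ := List.map_eq_cons_iff.mp hp
        rw [List.pairwise_cons] at hs
        refine ⟨q, hq, hs.2, fun x hx => ?_⟩
        have h1 := Fin.lt_def.mp (hs.1 x hx)
        have h2 := Fin.le_def.mp (hmin a (hv a (by simp)) ha)
        rw [Fin.val_succ]
        omega

theorem containsPattern_iff_eq {k n : ℕ} (σ : Fin n → Fin k) (τ : Equiv.Perm (Fin k)) :
    ContainsPattern σ τ ↔ ∃ i : Fin k → Fin n, StrictMono i ∧ ∀ j, σ (i j) = τ j := by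
  constructor
  · rintro ⟨i, hi, h⟩
    refine ⟨i, hi, fun j => ?_⟩
    have hm : StrictMono (fun x => σ (i (τ.symm x))) := by
      intro x y hxy
      exact (h _ _).mpr (by simpa using hxy)
    have hs : Function.Surjective (fun x => σ (i (τ.symm x))) :=
      Finite.injective_iff_surjective.mp hm.injective
    have he := (StrictMono.range_inj hm strictMono_id).mp (by rw [hs.range_eq]; simp)
    simpa using congrFun he (τ j)
  · rintro ⟨i, hi, h⟩
    exact ⟨i, hi, fun j j' => by rw [h, h]⟩

/-- `σ ∈ [k]^n` contains `τ ∈ S_k` as a pattern iff the cost of reading the word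
`τ(1), …, τ(k)` from the root of `A_σ` is at most `n`. -/
theorem containsPattern_iff_greedyDFA_cost_le (k n : ℕ) (σ : Fin n → Fin k)
    (τ : Equiv.Perm (Fin k)) :
    ContainsPattern σ τ ↔
      (greedyDFA σ).wordCost (greedyDFA σ).root (permWord τ) ≤ (n : ℕ∞) := by
  have h := greedy_cost_iff σ (permWord τ) (greedyDFA σ).root
  have h0 : (((greedyDFA σ).root : Fin (n + 1)) : ℕ) = 0 := rfl
  simp only [h0, Nat.cast_zero, zero_add, Nat.zero_le, implies_true, and_true] at h
  rw [h, containsPattern_iff_eq]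
  constructor
  · rintro ⟨i, hi, he⟩
    refine ⟨(List.finRange k).map i, ?_, ?_⟩
    · simp only [permWord, List.map_map]
      exact List.map_congr_left fun j _ => he j
    · rw [List.pairwise_map]
      exact (List.pairwise_lt_finRange k).imp fun hab => hi hab
  · rintro ⟨p, hp, hs⟩
    have hl : p.length = k := by simpa [permWord] using congrArg List.length hp
    refine ⟨fun j => p.get (j.cast hl.symm), ?_, fun j => ?_⟩
    · intro a b hab
      exact List.pairwise_iff_get.mp hs _ _ hab
    · have h1 : (p.map σ)[(j : ℕ)]? = (permWord τ)[(j : ℕ)]? := by rw [hp]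
      have hj : (j : ℕ) < p.length := by rw [hl]; exact j.isLt
      simpa [permWord, hj] using h1
end

section
/- Let D be a k-DFA with state set V, let ε > 0, and let L = L_0 + L_1 + ⋯ + L_M be positive integers with L ≤ k. Then P(v, L, ε) ≤ P(v, L_0, ε) + Σ_{u ∈ V} Σ_{m=1}^{M} P(u, L_m, ε) for every state v ∈ V. -/
/-- A function-word `w : Fin L → Fin k` viewed as a list `w(1), …, w(L)`. -/
def listOf {k L : ℕ} (w : Fin L → Fin k) : List (Fin k) :=
  (List.finRange L).map w

/-- `P(v, L, ε)`: the probability that `c(v, w) < (1/2 − ε)kL` for a uniformly random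
permutational (injective) word `w` of length `L` on `[k]`, expressed as
(number of such words) · (k−L)!/k!. A cost of `∞` is never `< (1/2 − ε)kL`. -/
noncomputable def badProb {k : ℕ} {V : Type*} (D : WDFA k V) (v : V) (L : ℕ) (ε : ℝ) : ℝ :=
  (Nat.card {w : Fin L → Fin k // Function.Injective w ∧
      ∃ m : ℕ, D.wordCost v (listOf w) = (m : ℕ∞) ∧ (m : ℝ) < (1/2 - ε) * k * L} : ℝ)
    * (Nat.factorial (k - L)) / (Nat.factorial k)

theorem card_sum_restrict {α β γ : Type} [Fintype α] [Fintype β] [Fintype γ]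
    (S : (α ↪ γ) → Prop) :
    Nat.card {w : α ⊕ β ↪ γ // S (Function.Embedding.inl.trans w)} =
      Nat.card {e : α ↪ γ // S e} *
        (Fintype.card γ - Fintype.card α).descFactorial (Fintype.card β) := by
  classical
  have e1 : {w : α ⊕ β ↪ γ // S (Function.Embedding.inl.trans w)} ≃
      {p : Σ f : α ↪ γ, β ↪ ↥(Set.range f)ᶜ // S p.1} :=
    Equiv.subtypeEquiv Equiv.sumEmbeddingEquivSigmaEmbeddingRestricted (by
      intro w
      rfl)
  have e2 : {p : Σ f : α ↪ γ, β ↪ ↥(Set.range f)ᶜ // S p.1} ≃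
      Σ f : {f : α ↪ γ // S f}, β ↪ ↥(Set.range f.1)ᶜ :=
    { toFun := fun p => ⟨⟨p.1.1, p.2⟩, p.1.2⟩
      invFun := fun q => ⟨⟨q.1.1, q.2⟩, q.1.2⟩
      left_inv := fun _ => rfl
      right_inv := fun _ => rfl }
  rw [Nat.card_congr (e1.trans e2), Nat.card_sigma]
  have h : ∀ f : {f : α ↪ γ // S f}, Nat.card (β ↪ ↥(Set.range f.1)ᶜ) =
      (Fintype.card γ - Fintype.card α).descFactorial (Fintype.card β) := by
    intro f
    rw [Nat.card_eq_fintype_card, Fintype.card_embedding_eq, Fintype.card_compl_set,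
      Set.card_range_of_injective f.1.injective]
  rw [Finset.sum_congr rfl fun f _ => h f, Finset.sum_const, Finset.card_univ, smul_eq_mul,
    Nat.card_eq_fintype_card]

theorem card_append_restrict {k a b : ℕ} (S : (Fin a → Fin k) → Prop) :
    Nat.card {w : Fin (a + b) → Fin k // Function.Injective w ∧ S (fun i => w (Fin.castAdd b i))} =
      Nat.card {e : Fin a → Fin k // Function.Injective e ∧ S e} * (k - a).descFactorial b := by
  have h := card_sum_restrict (α := Fin a) (β := Fin b) (γ := Fin k) (fun e => S e)
  simp only [Fintype.card_fin] at h
  have e1 : {e : Fin a → Fin k // Function.Injective e ∧ S e} ≃ {e : Fin a ↪ Fin k // S e} :=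
    { toFun := fun p => ⟨⟨p.1, p.2.1⟩, p.2.2⟩
      invFun := fun q => ⟨q.1, q.1.injective, q.2⟩
      left_inv := fun _ => rfl
      right_inv := fun _ => rfl }
  rw [Nat.card_congr e1, ← h]
  refine Nat.card_congr ⟨fun p => ⟨⟨p.1 ∘ finSumFinEquiv, p.2.1.comp finSumFinEquiv.injective⟩, ?_⟩,
    fun q => ⟨q.1 ∘ finSumFinEquiv.symm, q.1.injective.comp finSumFinEquiv.symm.injective, ?_⟩,
    ?_, ?_⟩
  · exact p.2.2
  · have := q.2
    have h2 : (fun i => (q.1 ∘ finSumFinEquiv.symm) (Fin.castAdd b i)) =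
        ⇑(Function.Embedding.inl.trans q.1) := by
      funext i
      simp
    rw [h2]
    exact this
  · intro p
    ext i
    simp
  · intro p
    ext i
    simp

theorem card_append_restrict_right {k a b : ℕ} (S : (Fin b → Fin k) → Prop) :
    Nat.card {w : Fin (a + b) → Fin k // Function.Injective w ∧ S (fun i => w (Fin.natAdd a i))} =
      Nat.card {e : Fin b → Fin k // Function.Injective e ∧ S e} * (k - b).descFactorial a := by
  rw [← card_append_restrict]
  refine Nat.card_congr (Equiv.subtypeEquiv (Equiv.arrowCongr finAddFlip (Equiv.refl _)) ?_)
  intro w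
  refine and_congr ?_ ?_
  · simp [Equiv.arrowCongr]
  · have : (fun i => (Equiv.arrowCongr finAddFlip (Equiv.refl _)) w (Fin.castAdd a i)) =
      (fun i => w (Fin.natAdd a i)) := by
      funext i
      have hi : finAddFlip.symm (Fin.castAdd a i) = Fin.natAdd a i := by
        rw [Equiv.symm_apply_eq, finAddFlip_apply_natAdd]
      simp [Equiv.arrowCongr, hi]
    rw [this]

theorem wordCost_append {k : ℕ} {V : Type*} (D : WDFA k V) (v : V) (x y : List (Fin k)) :
    D.wordCost v (x ++ y) = D.wordCost v x + D.wordCost (D.walkEnd v x) y := by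
  induction x generalizing v with
  | nil => simp [WDFA.wordCost, WDFA.walkEnd]
  | cons t x ih => simp [WDFA.wordCost, WDFA.walkEnd, ih, add_assoc]

theorem listOf_add {k a b : ℕ} (w : Fin (a + b) → Fin k) :
    listOf w = listOf (fun i => w (Fin.castAdd b i)) ++ listOf (fun i => w (Fin.natAdd a i)) := by
  simp only [listOf, ← List.ofFn_eq_map]
  exact List.ofFn_add

def IsBad {k : ℕ} {V : Type*} (D : WDFA k V) (ε : ℝ) (v : V) {L : ℕ} (w : Fin L → Fin k) : Prop :=
  ∃ m : ℕ, D.wordCost v (listOf w) = (m : ℕ∞) ∧ (m : ℝ) < (1/2 - ε) * k * L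

theorem IsBad.split {k : ℕ} {V : Type*} {D : WDFA k V} {ε : ℝ} {v : V} {a b : ℕ}
    {w : Fin (a + b) → Fin k} (h : IsBad D ε v w) :
    IsBad D ε v (fun i => w (Fin.castAdd b i)) ∨
      ∃ u, IsBad D ε u (fun i => w (Fin.natAdd a i)) := by
  obtain ⟨m, hm, hlt⟩ := h
  rw [listOf_add, wordCost_append] at hm
  have hne := hm ▸ ENat.natCast_ne_top m
  rw [ne_eq, ENat.add_eq_top, not_or] at hne
  obtain ⟨x, hx⟩ := ENat.ne_top_iff_exists.1 hne.1
  obtain ⟨y, hy⟩ := ENat.ne_top_iff_exists.1 hne.2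
  rw [← hx, ← hy] at hm
  have hxy : x + y = m := by exact_mod_cast hm
  by_cases h1 : (x : ℝ) < (1/2 - ε) * k * a
  · exact Or.inl ⟨x, hx.symm, h1⟩
  · refine Or.inr ⟨_, y, hy.symm, ?_⟩
    subst hxy
    push_cast at hlt
    linarith

theorem badProb_eq {k : ℕ} {V : Type*} (D : WDFA k V) (v : V) (L : ℕ) (ε : ℝ) :
    badProb D v L ε = (Nat.card {w : Fin L → Fin k // Function.Injective w ∧ IsBad D ε v w} : ℝ)
      * (Nat.factorial (k - L)) / (Nat.factorial k) := rfl

theorem badProb_add_le {k : ℕ} {V : Type*} [Fintype V] (D : WDFA k V) (v : V) (a b : ℕ) (ε : ℝ)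
    (hab : a + b ≤ k) :
    badProb D v (a + b) ε ≤ badProb D v a ε + ∑ u, badProb D u b ε := by
  classical
  have key : Nat.card {w : Fin (a + b) → Fin k // Function.Injective w ∧ IsBad D ε v w} ≤
      Nat.card {e : Fin a → Fin k // Function.Injective e ∧ IsBad D ε v e} *
        (k - a).descFactorial b +
      ∑ u, Nat.card {e : Fin b → Fin k // Function.Injective e ∧ IsBad D ε u e} *
        (k - b).descFactorial a := by
    have r : ∀ u, Nat.card {e : Fin b → Fin k // Function.Injective e ∧ IsBad D ε u e} *
        (k - b).descFactorial a = Nat.card {w : Fin (a + b) → Fin k //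
          Function.Injective w ∧ IsBad D ε u (fun i => w (Fin.natAdd a i))} :=
      fun u => (card_append_restrict_right (fun e => IsBad D ε u e)).symm
    rw [Finset.sum_congr rfl fun u _ => r u, ← card_append_restrict (fun e => IsBad D ε v e)]
    simp only [Nat.card_eq_fintype_card, Fintype.card_subtype]
    refine le_trans (Finset.card_le_card (t := (Finset.univ.filter _) ∪
      Finset.univ.biUnion (fun u => Finset.univ.filter _)) ?_)
      ((Finset.card_union_le _ _).trans (Nat.add_le_add_left Finset.card_biUnion_le _))
    intro w hw
    simp only [Finset.mem_filter, Finset.mem_union, Finset.mem_biUnion, Finset.mem_univ,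
      true_and] at hw ⊢
    rcases hw.2.split with h | ⟨u, h⟩
    · exact Or.inl ⟨hw.1, h⟩
    · exact Or.inr ⟨u, hw.1, h⟩
  have f1 : ((k - (a + b)).factorial : ℝ) * (k - a).descFactorial b = (k - a).factorial := by
    have := Nat.factorial_mul_descFactorial (n := k - a) (k := b) (by omega)
    rw [Nat.sub_sub] at this
    exact_mod_cast this
  have f2 : ((k - (a + b)).factorial : ℝ) * (k - b).descFactorial a = (k - b).factorial := by
    have := Nat.factorial_mul_descFactorial (n := k - b) (k := a) (by omega)
    rw [Nat.sub_sub, add_comm b a] at this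
    exact_mod_cast this
  simp only [badProb_eq]
  rw [← Finset.sum_div, ← add_div]
  refine div_le_div_of_nonneg_right ?_ (by positivity)
  rw [← f1, ← f2, ← Finset.sum_mul]
  have key' := (Nat.cast_le (α := ℝ)).2 key
  push_cast at key'
  rw [← Finset.sum_mul] at key'
  refine (mul_le_mul_of_nonneg_right key' (Nat.cast_nonneg (k - (a + b)).factorial)).trans
    (le_of_eq ?_)
  ring

/-- Splitting lemma: for a `k`-DFA `D` and a decomposition `L = L_0 + L_1 + ⋯ + L_M`
of positive integers with `L ≤ k`,
`P(v, L, ε) ≤ P(v, L_0, ε) + Σ_{u ∈ V} Σ_{m=1}^{M} P(u, L_m, ε)`. -/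
theorem badProb_le_sum_of_decomposition (k M : ℕ) {V : Type*} [Fintype V]
    (D : WDFA k V) (hD : D.IsKDFA) (ε : ℝ) (hε : 0 < ε)
    (Ls : Fin (M + 1) → ℕ) (hpos : ∀ m, 0 < Ls m) (hsum : (∑ m, Ls m) ≤ k) (v : V) :
    badProb D v (∑ m, Ls m) ε ≤
      badProb D v (Ls 0) ε + ∑ u : V, ∑ m : Fin M, badProb D u (Ls m.succ) ε := by
  induction M with
  | zero => simp
  | succ M ih =>
    rw [Fin.sum_univ_castSucc] at hsum ⊢
    have h1 := badProb_add_le D v _ _ ε hsum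
    have h2 := ih (fun m => Ls m.castSucc) (fun m => hpos _) (by omega)
    have h3 : ∑ u : V, ∑ m : Fin (M + 1), badProb D u (Ls m.succ) ε =
        ∑ u : V, ∑ m : Fin M, badProb D u (Ls m.succ.castSucc) ε +
          ∑ u : V, badProb D u (Ls (Fin.last (M + 1))) ε := by
      rw [← Finset.sum_add_distrib]
      refine Finset.sum_congr rfl fun u _ => ?_
      rw [Fin.sum_univ_castSucc]
      rfl
    rw [h3]
    have h0 : Ls (Fin.castSucc (0 : Fin (M + 1))) = Ls 0 := rfl
    simp only [h0] at h2
    linarith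
end

section
/- Let D be a k-DFA, let ε > 0, and let L ≤ k be a positive integer. Then P(L, ε) ≤ (k^L · (k−L)! / k!) · exp(−ε²L/4). -/
theorem WDFA.wordCost_ne_top {k : ℕ} {V : Type*} (D : WDFA k V) (hD : D.IsKDFA)
    (l : List (Fin k)) : ∀ v : V, D.wordCost v l ≠ ⊤ := by
  induction l with
  | nil => intro v; simp [WDFA.wordCost]
  | cons t w ih =>
    intro v
    obtain ⟨π, hπ⟩ := hD v
    rw [WDFA.wordCost, hπ t]
    exact WithTop.add_ne_top.2 ⟨ENat.natCast_ne_top _, ih _⟩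

theorem listOf_cons {k L : ℕ} (t : Fin k) (w : Fin L → Fin k) :
    listOf (Fin.cons t w : Fin (L + 1) → Fin k) = t :: listOf w := by
  simp [listOf, List.finRange_succ, Function.comp_def]

theorem sum_exp_wordCost {k : ℕ} {V : Type*} (D : WDFA k V) (hD : D.IsKDFA) (a : ℝ) (L : ℕ) :
    ∀ v : V, ∑ w : Fin L → Fin k, Real.exp (-a * ((D.wordCost v (listOf w)).toNat : ℝ)) =
      (∑ i : Fin k, Real.exp (-a * ((i : ℝ) + 1))) ^ L := by
  induction L with
  | zero => intro v; simp [listOf, WDFA.wordCost]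
  | succ L ih =>
    intro v
    obtain ⟨π, hπ⟩ := hD v
    rw [← (Fin.consEquiv (fun _ : Fin (L + 1) => Fin k)).sum_comp, Fintype.sum_prod_type]
    have key : ∀ t : Fin k, ∑ w : Fin L → Fin k, Real.exp (-a *
        ((D.wordCost v (listOf (Fin.consEquiv (fun _ : Fin (L + 1) => Fin k) (t, w)))).toNat : ℝ))
        = Real.exp (-a * (((π t : Fin k) : ℝ) + 1)) *
          (∑ i : Fin k, Real.exp (-a * ((i : ℝ) + 1))) ^ L := by
      intro t
      rw [← ih (D.trans v t), Finset.mul_sum]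
      refine Finset.sum_congr rfl fun w _ => ?_
      have h1 : listOf (Fin.consEquiv (fun _ : Fin (L + 1) => Fin k) (t, w)) = t :: listOf w :=
        listOf_cons t w
      rw [h1, WDFA.wordCost, hπ t,
        ENat.toNat_add (ENat.natCast_ne_top _) (D.wordCost_ne_top hD _ _), ENat.toNat_natCast,
        ← Real.exp_add]
      congr 1
      push_cast
      ring
    rw [Finset.sum_congr rfl fun t _ => key t, ← Finset.sum_mul,
      Equiv.sum_comp π (fun i : Fin k => Real.exp (-a * ((i : ℝ) + 1))), pow_succ']

theorem sum_exp_le_s11 (k : ℕ) (a : ℝ) :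
    ∑ i : Fin k, Real.exp (-a * ((i : ℝ) + 1)) ≤
      k * Real.exp (-a * (k + 1) / 2 + a ^ 2 * k ^ 2 / 8) := by
  have hrev : ∑ i : Fin k, Real.exp (-a * ((i : ℝ) + 1)) =
      ∑ i : Fin k, Real.exp (-a * ((k : ℝ) - i)) := by
    rw [← Equiv.sum_comp Fin.revPerm]
    refine Finset.sum_congr rfl fun i _ => ?_
    have : (((Fin.revPerm i : Fin k) : ℕ) : ℝ) = (k : ℝ) - (i + 1) := by
      rw [Fin.revPerm_apply, Fin.val_rev, Nat.cast_sub (by omega)]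
      push_cast; ring
    rw [this]; congr 1; ring
  have h2 : ∑ i : Fin k, (Real.exp (-a * ((i : ℝ) + 1)) + Real.exp (-a * ((k : ℝ) - i))) ≤
      ∑ _i : Fin k, 2 * Real.exp (-a * (k + 1) / 2 + a ^ 2 * k ^ 2 / 8) := by
    refine Finset.sum_le_sum fun i _ => ?_
    have hc := Real.cosh_le_exp_half_sq (a * ((i : ℝ) + 1 - (k + 1) / 2))
    have hi0 : (0 : ℝ) ≤ i := by positivity
    have hik : (i : ℝ) + 1 ≤ k := by exact_mod_cast i.2
    have hsq : (a * ((i : ℝ) + 1 - (k + 1) / 2)) ^ 2 / 2 ≤ a ^ 2 * k ^ 2 / 8 := by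
      have : ((i : ℝ) + 1 - (k + 1) / 2) ^ 2 ≤ (k / 2 : ℝ) ^ 2 := by
        apply sq_le_sq'  <;> linarith
      rw [mul_pow]
      nlinarith [mul_le_mul_of_nonneg_left this (sq_nonneg a)]
    have hc' := hc.trans (Real.exp_le_exp.2 hsq)
    have e : Real.exp (-a * ((i : ℝ) + 1)) + Real.exp (-a * ((k : ℝ) - i)) =
        2 * (Real.exp (-a * (k + 1) / 2) * Real.cosh (a * ((i : ℝ) + 1 - (k + 1) / 2))) := by
      have e1 : Real.exp (-a * ((i : ℝ) + 1)) = Real.exp (-a * (k + 1) / 2) *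
          Real.exp (-(a * ((i : ℝ) + 1 - (k + 1) / 2))) := by
        rw [← Real.exp_add]; congr 1; ring
      have e2 : Real.exp (-a * ((k : ℝ) - i)) = Real.exp (-a * (k + 1) / 2) *
          Real.exp (a * ((i : ℝ) + 1 - (k + 1) / 2)) := by
        rw [← Real.exp_add]; congr 1; ring
      rw [e1, e2, Real.cosh_eq]; ring
    rw [e, Real.exp_add]
    gcongr
  rw [Finset.sum_add_distrib, ← hrev] at h2
  simp only [Finset.sum_const, Finset.card_univ, Fintype.card_fin, nsmul_eq_mul] at h2
  linarith

theorem card_bad_le {k L : ℕ} (hk : 0 < k) {V : Type*} (D : WDFA k V) (hD : D.IsKDFA) (v : V)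
    (ε : ℝ) (hε : 0 < ε) :
    (Nat.card {w : Fin L → Fin k // Function.Injective w ∧
      ∃ m : ℕ, D.wordCost v (listOf w) = (m : ℕ∞) ∧ (m : ℝ) < (1/2 - ε) * k * L} : ℝ) ≤
      (k : ℝ) ^ L * Real.exp (-(ε^2) * L / 4) := by
  classical
  have hk' : (0 : ℝ) < k := by exact_mod_cast hk
  set a : ℝ := ε / k with ha
  have hapos : 0 < a := by positivity
  have hak : a * k = ε := by rw [ha]; field_simp
  set B : ℝ := (1/2 - ε) * k * L with hB
  rw [Nat.card_eq_fintype_card, Fintype.card_subtype, Finset.card_eq_sum_ones, Nat.cast_sum]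
  calc _ ≤ ∑ w ∈ Finset.univ.filter (fun w : Fin L → Fin k => Function.Injective w ∧
      ∃ m : ℕ, D.wordCost v (listOf w) = (m : ℕ∞) ∧ (m : ℝ) < B),
        Real.exp (a * B) * Real.exp (-a * ((D.wordCost v (listOf w)).toNat : ℝ)) := by
        refine Finset.sum_le_sum fun w hw => ?_
        obtain ⟨-, -, m, hm, hlt⟩ := Finset.mem_filter.1 hw
        rw [hm, ENat.toNat_natCast, ← Real.exp_add, Nat.cast_one]
        apply Real.one_le_exp
        nlinarith
    _ ≤ ∑ w : Fin L → Fin k,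
        Real.exp (a * B) * Real.exp (-a * ((D.wordCost v (listOf w)).toNat : ℝ)) :=
        Finset.sum_le_sum_of_subset_of_nonneg (Finset.filter_subset _ _)
          fun _ _ _ => by positivity
    _ = Real.exp (a * B) * (∑ i : Fin k, Real.exp (-a * ((i : ℝ) + 1))) ^ L := by
        rw [← Finset.mul_sum, sum_exp_wordCost D hD]
    _ ≤ Real.exp (a * B) * (k * Real.exp (-a * (k + 1) / 2 + a ^ 2 * k ^ 2 / 8)) ^ L := by
        have := sum_exp_le_s11 k a
        gcongr
    _ = (k : ℝ) ^ L * Real.exp (a * B + L * (-a * (k + 1) / 2 + a ^ 2 * k ^ 2 / 8)) := by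
        rw [mul_pow, ← Real.exp_nat_mul, Real.exp_add]; ring
    _ ≤ _ := by
        gcongr
        have e : a * B + L * (-a * (k + 1) / 2 + a ^ 2 * k ^ 2 / 8) =
            L * ((a * k) * (1 / 2 - ε) - (a * k) / 2 - a / 2 + (a * k) ^ 2 / 8) := by
          rw [hB]; ring
        rw [e, hak]
        have hL0 : (0 : ℝ) ≤ L := by positivity
        have : ε * (1 / 2 - ε) - ε / 2 - a / 2 + ε ^ 2 / 8 ≤ -(ε ^ 2) / 4 := by
          nlinarith [sq_nonneg ε]
        calc _ ≤ (L : ℝ) * (-(ε ^ 2) / 4) := mul_le_mul_of_nonneg_left this hL0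
          _ = _ := by ring

/-- For a `k`-DFA `D` and a positive integer `L ≤ k`:
`P(L, ε) ≤ (k^L · (k−L)!/k!) · exp(−ε²L/4)`, where `P(L, ε) = max_v P(v, L, ε)`. -/
theorem badProb_le_chernoff (k L : ℕ) (hL : 0 < L) (hLk : L ≤ k)
    {V : Type*} [Fintype V] [Nonempty V] (D : WDFA k V) (hD : D.IsKDFA)
    (ε : ℝ) (hε : 0 < ε) :
    (⨆ v : V, badProb D v L ε) ≤
      ((k : ℝ)^L * (Nat.factorial (k - L)) / (Nat.factorial k)) *
        Real.exp (-(ε^2) * L / 4) := by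
  refine ciSup_le fun v => ?_
  have h := card_bad_le (L := L) (lt_of_lt_of_le hL hLk) D hD v ε hε
  have hc : (0 : ℝ) ≤ (Nat.factorial (k - L) : ℝ) / (Nat.factorial k) := by positivity
  have := mul_le_mul_of_nonneg_right h hc
  unfold badProb
  rw [mul_div_assoc]
  refine this.trans (le_of_eq ?_)
  ring
end

section
/- For every ε* > 0 there exists c > 0 such that for all sufficiently large k: for every k-DFA D with at most k² states, the number of permutations τ ∈ S_k (read as the word τ(1),…,τ(k)) with c(root(D), τ) ≤ (1/2 − ε*)k² is at most exp(−ck)·k!. Equivalently, G(k, (1/2 − ε*)k², k²) ≤ exp(−ck)·k!. -/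
/-- Natural-number valued version of the word cost. -/
def WDFA.natCost {k : ℕ} {V : Type*} (D : WDFA k V) : V → List (Fin k) → ℕ
  | _, [] => 0
  | v, t :: w => (D.cost v t).toNat + D.natCost (D.trans v t) w

theorem wordCost_eq_natCost {k : ℕ} {V : Type*} (D : WDFA k V) (hD : D.IsKDFA)
    (v : V) (w : List (Fin k)) : D.wordCost v w = (D.natCost v w : ℕ∞) := by
  induction w generalizing v with
  | nil => simp [WDFA.wordCost, WDFA.natCost]
  | cons t w ih =>
    obtain ⟨π, hπ⟩ := hD v
    rw [WDFA.wordCost, WDFA.natCost, ih, hπ, ENat.toNat_natCast]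
    push_cast
    rfl

theorem natCost_append {k : ℕ} {V : Type*} (D : WDFA k V)
    (v : V) (w₁ w₂ : List (Fin k)) :
    D.natCost v (w₁ ++ w₂) = D.natCost v w₁ + D.natCost (D.walkEnd v w₁) w₂ := by
  induction w₁ generalizing v with
  | nil => simp [WDFA.natCost, WDFA.walkEnd]
  | cons t w ih =>
    simp only [List.cons_append, WDFA.natCost, WDFA.walkEnd, ih]
    ring

theorem natCost_windows {k : ℕ} {V : Type*} (D : WDFA k V) (s : ℕ) (B : ℝ) (M : ℕ) :
    ∀ (w : List (Fin k)) (v : V),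
      (∀ i < M, ∀ u : V, B ≤ (D.natCost u ((w.drop (i * s)).take s) : ℝ)) →
      (M : ℝ) * B ≤ (D.natCost v w : ℝ) := by
  induction M with
  | zero => intro w v _; simp
  | succ M ih =>
    intro w v h
    have h0 := h 0 (by omega) v
    have h1 := ih (w.drop s) (D.walkEnd v (w.take s)) (by
      intro i hi u
      have := h (i + 1) (by omega) u
      rw [List.drop_drop]
      have e : s + i * s = (i + 1) * s := by ring
      rwa [e])
    have e := natCost_append D v (w.take s) (w.drop s)
    rw [List.take_append_drop] at e
    rw [e]
    simp only [zero_mul, List.drop_zero] at h0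
    push_cast
    linarith

theorem exp_moment {k : ℕ} {V : Type*} (D : WDFA k V) (hD : D.IsKDFA) (l : ℝ) (s : ℕ) :
    ∀ v : V, ∑ f : Fin s → Fin k, Real.exp (-l * (D.natCost v (List.ofFn f) : ℝ))
      = (∑ j : Fin k, Real.exp (-l * ((j : ℝ) + 1))) ^ s := by
  induction s with
  | zero => intro v; simp [WDFA.natCost]
  | succ s ih =>
    intro v
    rw [← (Fin.consEquiv (fun _ : Fin (s + 1) => Fin k)).sum_comp, Fintype.sum_prod_type]
    have : ∀ (t : Fin k) (g : Fin s → Fin k),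
        Real.exp (-l * (D.natCost v
          (List.ofFn ((Fin.consEquiv (fun _ : Fin (s + 1) => Fin k)) (t, g))) : ℝ))
        = Real.exp (-l * ((D.cost v t).toNat : ℝ)) *
          Real.exp (-l * (D.natCost (D.trans v t) (List.ofFn g) : ℝ)) := by
      intro t g
      rw [← Real.exp_add]
      simp only [Fin.consEquiv, Equiv.coe_fn_mk, List.ofFn_succ, Fin.cons_zero, Fin.cons_succ,
        WDFA.natCost]
      push_cast
      ring_nf
    simp only [this, ← Finset.mul_sum, ih, ← Finset.sum_mul]
    rw [pow_succ, mul_comm]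
    congr 1
    obtain ⟨π, hπ⟩ := hD v
    rw [← Equiv.sum_comp π (fun j : Fin k => Real.exp (-l * ((j : ℝ) + 1)))]
    refine Finset.sum_congr rfl fun t _ => ?_
    rw [hπ, ENat.toNat_natCast]
    push_cast
    rfl

theorem moment_bound (k : ℕ) (hk : 0 < k) (t : ℝ) (ht : 0 ≤ t) :
    ∑ j : Fin k, Real.exp (-(t / k) * ((j : ℝ) + 1)) ≤ k * Real.exp (-t / 2 + t ^ 2 / 2) := by
  have hk' : (0 : ℝ) < k := by exact_mod_cast hk
  have key : ∀ x : ℝ, 0 ≤ x → Real.exp (-x) ≤ 1 - x + x ^ 2 / 2 := by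
    intro x hx
    have h1 : 1 + x + x ^ 2 / 2 ≤ Real.exp x := Real.quadratic_le_exp_of_nonneg hx
    rw [Real.exp_neg, inv_le_comm₀ (Real.exp_pos _) (by nlinarith [sq_nonneg (x - 1)])]
    refine le_trans ?_ h1
    rw [inv_le_iff_one_le_mul₀ (by nlinarith [sq_nonneg (x - 1)])]
    nlinarith [sq_nonneg (x ^ 2)]
  have h1 : ∀ j : Fin k, Real.exp (-(t / k) * ((j : ℝ) + 1)) ≤
      1 - (t / k) * ((j : ℝ) + 1) + t ^ 2 / 2 := by
    intro j
    have hj : ((j : ℝ) + 1) ≤ k := by exact_mod_cast j.2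
    have hx : 0 ≤ (t / k) * ((j : ℝ) + 1) := by positivity
    have hx2 : (t / k) * ((j : ℝ) + 1) ≤ t := by
      calc (t / k) * ((j : ℝ) + 1) ≤ (t / k) * k := by gcongr
        _ = t := by field_simp
    have := key _ hx
    rw [neg_mul]
    nlinarith
  have hsum : ∑ j : Fin k, ((j : ℝ) + 1) = k * (k + 1) / 2 := by
    rw [Fin.sum_univ_eq_sum_range (fun i : ℕ => (i : ℝ) + 1) k]
    clear * -
    induction k with
    | zero => simp
    | succ n ih => rw [Finset.sum_range_succ, ih]; push_cast; ring
  calc ∑ j : Fin k, Real.exp (-(t / k) * ((j : ℝ) + 1))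
      ≤ ∑ j : Fin k, (1 - (t / k) * ((j : ℝ) + 1) + t ^ 2 / 2) :=
        Finset.sum_le_sum fun j _ => h1 j
    _ = k - (t / k) * (k * (k + 1) / 2) + k * (t ^ 2 / 2) := by
        rw [Finset.sum_add_distrib, Finset.sum_sub_distrib, ← Finset.mul_sum, hsum]
        simp
    _ = k * (-t / 2 + t ^ 2 / 2 + 1) - t / 2 := by field_simp; ring
    _ ≤ k * (-t / 2 + t ^ 2 / 2 + 1) := by linarith
    _ ≤ _ := by
        gcongr
        exact Real.add_one_le_exp _

open Classical in
theorem cheap_words {k : ℕ} (hk : 0 < k) {V : Type*} (D : WDFA k V) (hD : D.IsKDFA)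
    (d : ℝ) (hd : 0 ≤ d) (s : ℕ) (v : V) :
    ((Finset.univ.filter fun f : Fin s → Fin k =>
      (D.natCost v (List.ofFn f) : ℝ) < (1 / 2 - d) * k * s).card : ℝ)
      ≤ (k : ℝ) ^ s * Real.exp (-(d ^ 2 / 2) * s) := by
  have hk' : (0 : ℝ) < k := by exact_mod_cast hk
  set A := Finset.univ.filter fun f : Fin s → Fin k =>
      (D.natCost v (List.ofFn f) : ℝ) < (1 / 2 - d) * k * s with hA
  have h1 : (A.card : ℝ) * Real.exp (-d * (1 / 2 - d) * s) ≤
      (k * Real.exp (-d / 2 + d ^ 2 / 2)) ^ s := by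
    calc (A.card : ℝ) * Real.exp (-d * (1 / 2 - d) * s)
        = ∑ f ∈ A, Real.exp (-d * (1 / 2 - d) * s) := by simp
      _ ≤ ∑ f ∈ A, Real.exp (-(d / k) * (D.natCost v (List.ofFn f) : ℝ)) := by
          refine Finset.sum_le_sum fun f hf => ?_
          rw [Real.exp_le_exp]
          have hf' := (Finset.mem_filter.mp hf).2
          have : (d / k) * (D.natCost v (List.ofFn f) : ℝ) ≤ (d / k) * ((1 / 2 - d) * k * s) := by
            gcongr
          have e : (d / k) * ((1 / 2 - d) * k * s) = d * (1 / 2 - d) * s := by field_simp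
          rw [e] at this
          linarith
      _ ≤ ∑ f : Fin s → Fin k, Real.exp (-(d / k) * (D.natCost v (List.ofFn f) : ℝ)) :=
          Finset.sum_le_sum_of_subset_of_nonneg (Finset.subset_univ _)
            fun _ _ _ => (Real.exp_pos _).le
      _ = _ := exp_moment D hD _ s v
      _ ≤ _ := by
          gcongr
          exact moment_bound k hk d hd
  rw [mul_pow, ← Real.exp_nat_mul] at h1
  have h2 : Real.exp ((s : ℝ) * (-d / 2 + d ^ 2 / 2)) =
      Real.exp (-(d ^ 2 / 2) * s) * Real.exp (-d * (1 / 2 - d) * s) := by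
    rw [← Real.exp_add]; ring_nf
  rw [h2, ← mul_assoc] at h1
  exact le_of_mul_le_mul_right h1 (Real.exp_pos _)

open Classical in
theorem fiber_card {k s : ℕ} (e : Fin s ↪ Fin k) (f : Fin s → Fin k) :
    (Finset.univ.filter fun τ : Equiv.Perm (Fin k) => (fun j => τ (e j)) = f).card
      ≤ (k - s).factorial := by
  set A := Finset.univ.filter fun τ : Equiv.Perm (Fin k) => (fun j => τ (e j)) = f with hA
  rcases A.eq_empty_or_nonempty with h | ⟨τ₀, h₀⟩
  · rw [h]; simp
  have h₀' := (Finset.mem_filter.mp h₀).2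
  let p : Fin k → Prop := fun a => a ∉ Set.range e
  have hc : Fintype.card (Subtype p) = k - s := by
    rw [Fintype.card_subtype_compl]
    simp only [Fintype.card_fin]
    congr 1
    have := Fintype.card_congr (Equiv.ofInjective e e.injective)
    rw [Fintype.card_fin] at this
    exact (Fintype.card_congr (Equiv.refl _)).trans this.symm
  have hc2 : Fintype.card {g : Equiv.Perm (Fin k) // ∀ a, ¬ p a → g a = a} =
      (k - s).factorial := by
    rw [← hc, ← Fintype.card_perm]
    exact (Fintype.card_congr (Equiv.Perm.subtypeEquivSubtypePerm p)).symm
  rw [← hc2, Fintype.card_subtype]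
  refine Finset.card_le_card_of_injOn (fun τ => τ₀⁻¹ * τ) ?_ ?_
  · intro τ hτ
    have hτ' := (Finset.mem_filter.mp hτ).2
    simp only [Finset.coe_filter, Finset.mem_univ, true_and, Set.mem_ofPred_eq]
    intro a ha
    simp only [p, not_not] at ha
    obtain ⟨j, rfl⟩ := ha
    have := congrFun (hτ'.trans h₀'.symm) j
    rw [Equiv.Perm.mul_apply, this, ← Equiv.Perm.mul_apply, inv_mul_cancel, Equiv.Perm.one_apply]
  · intro a _ b _ hab
    exact mul_left_cancel hab

open Classical in
theorem cheap_perms {k : ℕ} (hk : 0 < k) {V : Type*} (D : WDFA k V) (hD : D.IsKDFA)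
    (d : ℝ) (hd : 0 ≤ d) (s a : ℕ) (ha : a + s ≤ k) (v : V) :
    ((Finset.univ.filter fun τ : Equiv.Perm (Fin k) =>
      (D.natCost v (((permWord τ).drop a).take s) : ℝ) < (1 / 2 - d) * k * s).card : ℝ)
      ≤ (k - s).factorial * ((k : ℝ) ^ s * Real.exp (-(d ^ 2 / 2) * s)) := by
  let e : Fin s ↪ Fin k := ⟨fun j => ⟨a + j, by omega⟩, by
    intro i j h
    simp only [Fin.mk.injEq] at h
    ext
    omega⟩
  have hw : ∀ τ : Equiv.Perm (Fin k),
      ((permWord τ).drop a).take s = List.ofFn (fun j => τ (e j)) := by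
    intro τ
    apply List.ext_getElem
    · simp [permWord]; omega
    · intro i h1 h2
      simp [permWord, e]
      rfl
  simp only [hw]
  refine le_trans ?_ (mul_le_mul_of_nonneg_left (cheap_words hk D hD d hd s v)
    (Nat.cast_nonneg _))
  norm_cast
  rw [mul_comm]
  refine Finset.card_le_mul_card_image_of_maps_to (f := fun τ : Equiv.Perm (Fin k) => fun j => τ (e j)) ?_ _ ?_
  · intro τ hτ
    simpa using hτ
  · intro f hf
    refine le_trans (Finset.card_le_card ?_) (fiber_card e f)
    intro τ hτ
    simp only [Finset.mem_filter] at hτ ⊢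
    exact ⟨Finset.mem_univ _, hτ.2⟩

theorem factorial_bound (k s : ℕ) (η : ℝ) (h1 : η ≤ 1) (hs : (s : ℝ) * 2 ≤ k * η) (hη : 0 ≤ η):
    ((k - s).factorial : ℝ) * (k : ℝ) ^ s ≤ k.factorial * Real.exp (η * s) := by
  have hsk : s ≤ k := by
    have : (s : ℝ) ≤ k := by nlinarith [(Nat.cast_nonneg k : (0 : ℝ) ≤ k), (Nat.cast_nonneg s : (0 : ℝ) ≤ s)]
    exact_mod_cast this
  have hf : ((k - s).factorial : ℝ) * ((k : ℝ) - s) ^ s ≤ k.factorial := by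
    have := Nat.factorial_mul_pow_sub_le_factorial (Nat.sub_le k s)
    rw [Nat.sub_sub_self hsk] at this
    rw [← Nat.cast_sub hsk]
    exact_mod_cast this
  have hk : (k : ℝ) ≤ ((k : ℝ) - s) * Real.exp η := by
    have h3 : (s : ℝ) ≤ k := by exact_mod_cast hsk
    have h2 := Real.add_one_le_exp η
    have : ((k : ℝ) - s) * (η + 1) ≤ ((k : ℝ) - s) * Real.exp η := by
      apply mul_le_mul_of_nonneg_left h2; linarith
    nlinarith [(Nat.cast_nonneg s : (0 : ℝ) ≤ s)]
  calc ((k - s).factorial : ℝ) * (k : ℝ) ^ s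
      ≤ ((k - s).factorial : ℝ) * (((k : ℝ) - s) * Real.exp η) ^ s := by gcongr
    _ = (((k - s).factorial : ℝ) * ((k : ℝ) - s) ^ s) * Real.exp (η * s) := by
        rw [mul_pow, ← Real.exp_nat_mul, mul_comm (s : ℝ) η, mul_assoc]
    _ ≤ _ := by gcongr

theorem eventually_absorb (C c : ℝ) (hc : 0 < c) :
    ∃ K : ℕ, ∀ k : ℕ, K ≤ k → C * (k : ℝ) ^ 2 ≤ Real.exp (c * k) := by
  have h := (isLittleO_pow_exp_pos_mul_atTop 2 hc).const_mul_left C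
  have h2 := (h.comp_tendsto tendsto_natCast_atTop_atTop).bound (zero_lt_one)
  obtain ⟨K, hK⟩ := Filter.eventually_atTop.mp h2
  refine ⟨K, fun k hk => ?_⟩
  have := hK k hk
  simp only [Function.comp, one_mul, Real.norm_eq_abs, Real.abs_exp] at this
  exact (le_abs_self _).trans this

/-- Theorem (main counting bound): for every `ε* > 0` there is `c > 0` such that for all
sufficiently large `k`, every `k`-DFA with at most `k²` states admits at most
`exp(−ck)·k!` permutations `τ ∈ S_k` with `c(root, τ) ≤ (1/2 − ε*)k²`; i.e.
`G(k, (1/2 − ε*)k², k²) ≤ exp(−ck)·k!`. -/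
theorem kDFA_few_cheap_permutations :
    ∀ ε : ℝ, 0 < ε → ∃ c : ℝ, 0 < c ∧ ∃ K : ℕ, ∀ k : ℕ, K ≤ k →
      ∀ (V : Type) [Fintype V], Fintype.card V ≤ k^2 →
        ∀ D : WDFA k V, D.IsKDFA →
          (Nat.card {τ : Equiv.Perm (Fin k) // ∃ m : ℕ,
              D.wordCost D.root (permWord τ) = (m : ℕ∞) ∧
              (m : ℝ) ≤ (1/2 - ε) * (k : ℝ)^2} : ℝ) ≤
            Real.exp (-c * k) * (Nat.factorial k) := by
  classical
  intro ε hε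
  obtain ⟨d, hd0, hd1, hdε⟩ : ∃ d : ℝ, 0 < d ∧ d ≤ 1 / 8 ∧ 2 * d ≤ ε := by
    refine ⟨min ε (1 / 4) / 2, by positivity, ?_, ?_⟩
    · linarith [min_le_right ε (1 / 4)]
    · linarith [min_le_left ε (1 / 4)]
  obtain ⟨M, hM⟩ := exists_nat_ge (8 / d ^ 2)
  have hM0 : (0 : ℝ) < M := lt_of_lt_of_le (by positivity) hM
  have hMn : 0 < M := by exact_mod_cast hM0
  have hMd : 8 ≤ M * d ^ 2 := by rwa [div_le_iff₀ (by positivity)] at hM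
  have hc : 0 < d ^ 2 / (8 * M) := by positivity
  obtain ⟨K₁, hK₁⟩ := eventually_absorb (M * Real.exp (d ^ 2 / 4)) _ hc
  obtain ⟨K₂, hK₂⟩ := exists_nat_ge (M / d)
  refine ⟨d ^ 2 / (8 * M), hc, max K₁ (max K₂ 1), ?_⟩
  intro k hk V _ hV D hD
  have hk1 : K₁ ≤ k := (le_max_left _ _).trans hk
  have hk2 : K₂ ≤ k := ((le_max_left _ _).trans (le_max_right _ _)).trans hk
  have hk3 : 0 < k := ((le_max_right _ _).trans (le_max_right _ _)).trans hk
  have hkR : (0 : ℝ) < k := by exact_mod_cast hk3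
  have hkd : (M : ℝ) ≤ d * k := by
    have : (M : ℝ) / d ≤ k := hK₂.trans (by exact_mod_cast hk2)
    rw [div_le_iff₀ hd0] at this
    linarith
  set s := k / M with hs
  have hsM : (s : ℝ) * M ≤ k := by exact_mod_cast Nat.div_mul_le_self k M
  have hsM' : (k : ℝ) < (s : ℝ) * M + M := by
    have := Nat.lt_div_mul_add (a := k) hMn
    exact_mod_cast this
  let bad : ℕ → V → Finset (Equiv.Perm (Fin k)) := fun i v =>
    Finset.univ.filter fun τ : Equiv.Perm (Fin k) =>
      (D.natCost v (((permWord τ).drop (i * s)).take s) : ℝ) < (1 / 2 - d) * k * s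
  have hbad : ∀ i < M, ∀ v, ((bad i v).card : ℝ) ≤ k.factorial * Real.exp (-(d ^ 2 / 4) * s) := by
    intro i hi v
    have hle : i * s + s ≤ k := by
      calc i * s + s = (i + 1) * s := by ring
        _ ≤ M * s := Nat.mul_le_mul_right _ hi
        _ ≤ k := Nat.mul_div_le k M
    refine (cheap_perms hk3 D hD d hd0.le s (i * s) hle v).trans ?_
    have hF := factorial_bound k s (d ^ 2 / 4) (by nlinarith) (by
      have : (s : ℝ) * 8 ≤ s * (M * d ^ 2) := by gcongr
      nlinarith [mul_le_mul_of_nonneg_right hsM (sq_nonneg d)]) (by positivity)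
    calc ((k - s).factorial : ℝ) * ((k : ℝ) ^ s * Real.exp (-(d ^ 2 / 2) * s))
        = ((k - s).factorial * (k : ℝ) ^ s) * Real.exp (-(d ^ 2 / 2) * s) := by ring
      _ ≤ (k.factorial * Real.exp (d ^ 2 / 4 * s)) * Real.exp (-(d ^ 2 / 2) * s) := by gcongr
      _ = k.factorial * Real.exp (-(d ^ 2 / 4) * s) := by
        rw [mul_assoc, ← Real.exp_add]; ring_nf
  have hsub : (Finset.univ.filter fun τ : Equiv.Perm (Fin k) => ∃ m : ℕ,
      D.wordCost D.root (permWord τ) = (m : ℕ∞) ∧ (m : ℝ) ≤ (1/2 - ε) * (k : ℝ)^2) ⊆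
      (Finset.range M ×ˢ (Finset.univ : Finset V)).biUnion fun x => bad x.1 x.2 := by
    intro τ hτ
    obtain ⟨m, hm, hm2⟩ := (Finset.mem_filter.mp hτ).2
    rw [wordCost_eq_natCost D hD] at hm
    have hm' : D.natCost D.root (permWord τ) = m := by exact_mod_cast hm
    by_contra hno
    have hall : ∀ i < M, ∀ u : V, (1 / 2 - d) * k * s ≤
        (D.natCost u (((permWord τ).drop (i * s)).take s) : ℝ) := by
      intro i hi u
      by_contra hlt
      apply hno
      rw [Finset.mem_biUnion]
      refine ⟨(i, u), by simpa using hi, ?_⟩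
      simp only [bad, Finset.mem_filter, Finset.mem_univ, true_and]
      exact not_le.mp hlt
    have := natCost_windows D s _ M (permWord τ) D.root hall
    rw [hm'] at this
    have h1 : (1 / 2 - ε) * (k : ℝ) ^ 2 ≤ (1 / 2 - 2 * d) * (k : ℝ) ^ 2 := by gcongr
    have h2 : (1 / 2 - d) * k * (k - M) < M * ((1 / 2 - d) * k * s) := by
      have h3 : 0 < (1 / 2 - d) * k := mul_pos (by linarith) hkR
      nlinarith
    have h4 : (k : ℝ) * ((1 / 2 - d) * (k - M)) < k * ((1 / 2 - 2 * d) * k) := by nlinarith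
    have h5 := lt_of_mul_lt_mul_left h4 hkR.le
    nlinarith
  rw [Nat.card_eq_fintype_card, Fintype.card_subtype]
  have hV' : (Fintype.card V : ℝ) ≤ (k : ℝ) ^ 2 := by exact_mod_cast hV
  have hexp : Real.exp (-(d ^ 2 / 4) * s) ≤
      Real.exp (d ^ 2 / 4) * Real.exp (-(2 * (d ^ 2 / (8 * M)) * k)) := by
    rw [← Real.exp_add, Real.exp_le_exp]
    have : 2 * (d ^ 2 / (8 * M)) * k ≤ d ^ 2 / 4 * (s + 1) := by
      have e : 2 * (d ^ 2 / (8 * M)) * k = d ^ 2 / 4 * (k / M) := by field_simp; ring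
      rw [e]
      gcongr
      rw [div_le_iff₀ hM0]
      linarith
    linarith
  calc _ ≤ (((Finset.range M ×ˢ (Finset.univ : Finset V)).biUnion fun x => bad x.1 x.2).card : ℝ) := by
        exact_mod_cast Finset.card_le_card hsub
    _ ≤ ∑ x ∈ Finset.range M ×ˢ (Finset.univ : Finset V), ((bad x.1 x.2).card : ℝ) := by
        exact_mod_cast Finset.card_biUnion_le
    _ ≤ ∑ x ∈ Finset.range M ×ˢ (Finset.univ : Finset V),
          (k.factorial * Real.exp (-(d ^ 2 / 4) * s)) := by
        refine Finset.sum_le_sum fun x hx => hbad _ ?_ _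
        exact Finset.mem_range.mp (Finset.mem_product.mp hx).1
    _ = (M * Fintype.card V) * (k.factorial * Real.exp (-(d ^ 2 / 4) * s)) := by
        simp
    _ ≤ (M * (k : ℝ) ^ 2) * (k.factorial *
          (Real.exp (d ^ 2 / 4) * Real.exp (-(2 * (d ^ 2 / (8 * M)) * k)))) := by gcongr
    _ = (M * Real.exp (d ^ 2 / 4) * (k : ℝ) ^ 2) *
          (Real.exp (-(2 * (d ^ 2 / (8 * M)) * k)) * k.factorial) := by ring
    _ ≤ Real.exp (d ^ 2 / (8 * M) * k) *
          (Real.exp (-(2 * (d ^ 2 / (8 * M)) * k)) * k.factorial) := by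
        gcongr
        exact hK₁ k hk1
    _ = _ := by
        rw [← mul_assoc, ← Real.exp_add]
        ring_nf
end

section
/- Fix ε* > 0 and a positive integer M ≥ 2, and set c = (ε*/M)²/2. Then for each m_1, m_2 ∈ {1, …, M−1} and all sufficiently large k: if X_1, …, X_k are independent with X_j uniform on {1,…,k−j+1}, then the probability that |{j : m_1·k/M < j ≤ (m_1+1)·k/M and X_j/(k−j+1) > m_2/M}| < (1 − ε*)(1 − m_2/M)·k/M is at most exp(−ck). Equivalently, the number of tuples (x_1,…,x_k) with x_j ∈ {1,…,k−j+1} satisfying that event is at most exp(−ck)·k!. -/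
lemma aux_log (ε : ℝ) (h0 : 0 < ε) (h1 : ε < 1) :
    0 < ((1 - ε) * Real.log (1 - ε) + ε) - ε ^ 2 / 2 := by
  have hu : 0 < 1 - ε := by linarith
  have ht : 0 < -Real.log (1 - ε) := by
    have := Real.log_neg hu (by linarith)
    linarith
  have h := Real.self_lt_sinh_iff.2 ht
  rw [Real.sinh_eq, neg_neg, Real.exp_neg, Real.exp_log hu] at h
  have h2 := mul_lt_mul_of_pos_left h hu
  have h3 : (1 - ε) * (((1 - ε)⁻¹ - (1 - ε)) / 2) = (1 - (1 - ε) ^ 2) / 2 := by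
    field_simp
  rw [h3] at h2
  nlinarith

lemma aux_sum (n : ℕ) (hn : 0 < n) (q s : ℝ) (hq : 0 ≤ q) (hs : s ≤ 1) :
    ∑ y ∈ Finset.Icc 1 n, (if q < (y : ℝ) / n then s else 1) ≤ n * (1 - (1 - q) * (1 - s)) := by
  have hn' : (0 : ℝ) < n := by exact_mod_cast hn
  have hB : (((Finset.Icc 1 n).filter (fun y : ℕ => ¬ q < (y : ℝ) / n)).card : ℝ) ≤ q * n := by
    have hsub : (Finset.Icc 1 n).filter (fun y : ℕ => ¬ q < (y : ℝ) / n) ⊆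
        Finset.Icc 1 ⌊q * n⌋₊ := by
      intro y hy
      simp only [Finset.mem_filter, Finset.mem_Icc, not_lt] at hy ⊢
      refine ⟨hy.1.1, Nat.le_floor ?_⟩
      exact (div_le_iff₀ hn').1 hy.2
    have := Finset.card_le_card hsub
    rw [Nat.card_Icc, Nat.add_sub_cancel] at this
    calc _ ≤ ((⌊q * n⌋₊ : ℕ) : ℝ) := by exact_mod_cast this
      _ ≤ _ := Nat.floor_le (by positivity)
  have hT := Finset.card_filter_add_card_filter_not (s := Finset.Icc 1 n)
    (fun y : ℕ => q < (y : ℝ) / n)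
  rw [Nat.card_Icc, Nat.add_sub_cancel] at hT
  have hT' : (((Finset.Icc 1 n).filter (fun y : ℕ => q < (y : ℝ) / n)).card : ℝ) +
    (((Finset.Icc 1 n).filter (fun y : ℕ => ¬ q < (y : ℝ) / n)).card : ℝ) = n := by
    exact_mod_cast hT
  rw [Finset.sum_ite, Finset.sum_const, Finset.sum_const, nsmul_eq_mul, nsmul_eq_mul]
  nlinarith

lemma aux_window (k M m : ℕ) (hM : 0 < M) (hm : m + 1 ≤ M) :
    (k : ℝ) / M - 1 ≤ ((Finset.univ.filter (fun j : Fin k =>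
      (m : ℝ) * k / M < (j : ℕ) + 1 ∧ ((j : ℕ) + 1 : ℝ) ≤ ((m : ℝ) + 1) * k / M)).card : ℝ) := by
  have hM' : (0 : ℝ) < M := by exact_mod_cast hM
  have hm' : (m : ℝ) + 1 ≤ M := by exact_mod_cast hm
  set W := Finset.univ.filter (fun j : Fin k =>
      (m : ℝ) * k / M < (j : ℕ) + 1 ∧ ((j : ℕ) + 1 : ℝ) ≤ ((m : ℝ) + 1) * k / M) with hW
  set a := (m : ℝ) * k / M with ha
  set b := ((m : ℝ) + 1) * k / M with hb
  have ha0 : 0 ≤ a := by positivity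
  have hb0 : 0 ≤ b := by positivity
  have hbk : b ≤ k := by
    rw [hb, div_le_iff₀ hM']
    have : (0 : ℝ) ≤ k := by positivity
    nlinarith
  have hab : b = a + k / M := by rw [ha, hb]; ring
  have hsub : Finset.Ioc ⌊a⌋₊ ⌊b⌋₊ ⊆ W.image (fun j : Fin k => (j : ℕ) + 1) := by
    intro y hy
    rw [Finset.mem_Ioc] at hy
    have h1 : a < y := (Nat.floor_lt ha0).1 hy.1
    have h2 : (y : ℝ) ≤ b := (Nat.le_floor_iff hb0).1 hy.2
    have h3 : y ≤ k := by exact_mod_cast h2.trans hbk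
    have h4 : 0 < y := by omega
    rw [Finset.mem_image]
    refine ⟨⟨y - 1, by omega⟩, ?_, by simp; omega⟩
    have h5 : ((y - 1 : ℕ) : ℝ) + 1 = y := by
      exact_mod_cast (by omega : y - 1 + 1 = y)
    simp only [hW, Finset.mem_filter, Finset.mem_univ, true_and]
    rw [h5]
    exact ⟨h1, h2⟩
  have hc := (Finset.card_le_card hsub).trans Finset.card_image_le
  rw [Nat.card_Ioc] at hc
  have hc' : (⌊b⌋₊ : ℝ) ≤ W.card + ⌊a⌋₊ := by
    exact_mod_cast (by omega : ⌊b⌋₊ ≤ W.card + ⌊a⌋₊)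
  have := Nat.floor_le ha0
  have := Nat.lt_floor_add_one b
  linarith

lemma aux_fact (k : ℕ) : ∏ j : Fin k, ((k - (j : ℕ) : ℕ) : ℝ) = (Nat.factorial k : ℝ) := by
  rw [Fin.prod_univ_eq_prod_range (fun j => ((k - j : ℕ) : ℝ)) k, ← Nat.cast_prod,
    ← Nat.descFactorial_eq_prod_range, Nat.descFactorial_self]

lemma aux_main (k : ℕ) (W : Finset (Fin k)) (q s a : ℝ) (hq : 0 ≤ q) (hq1 : q ≤ 1)
    (hs0 : 0 < s) (hs : s < 1) :
    (Nat.card {x : Fin k → ℕ // (∀ j : Fin k, 1 ≤ x j ∧ x j ≤ k - (j : ℕ)) ∧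
      (Nat.card {j : Fin k // j ∈ W ∧ q < (x j : ℝ) / ((k : ℝ) - (j : ℕ))} : ℝ) < a} : ℝ) * s ^ a
    ≤ Nat.factorial k * Real.exp (-((1 - q) * (1 - s)) * W.card) := by
  classical
  set f : Fin k → ℕ → ℝ := fun j y =>
    if j ∈ W ∧ q < (y : ℝ) / ((k : ℝ) - (j : ℕ)) then s else 1 with hf
  set P := Fintype.piFinset (fun j : Fin k => Finset.Icc 1 (k - (j : ℕ))) with hP
  set B := P.filter (fun x =>
    (Nat.card {j : Fin k // j ∈ W ∧ q < (x j : ℝ) / ((k : ℝ) - (j : ℕ))} : ℝ) < a) with hB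
  have hcard : Nat.card {x : Fin k → ℕ // (∀ j : Fin k, 1 ≤ x j ∧ x j ≤ k - (j : ℕ)) ∧
      (Nat.card {j : Fin k // j ∈ W ∧ q < (x j : ℝ) / ((k : ℝ) - (j : ℕ))} : ℝ) < a} = B.card := by
    apply Nat.subtype_card
    intro x
    simp [hB, hP, Fintype.mem_piFinset]
  have hf0 : ∀ j y, 0 ≤ f j y := by
    intro j y
    simp only [hf]
    split_ifs <;> linarith
  have hx : ∀ x ∈ B, s ^ a ≤ ∏ j, f j (x j) := by
    intro x hx
    have h := (Finset.mem_filter.1 hx).2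
    have hp : ∏ j, f j (x j) = s ^ (Nat.card {j : Fin k // j ∈ W ∧
        q < (x j : ℝ) / ((k : ℝ) - (j : ℕ))} : ℝ) := by
      rw [Real.rpow_natCast, Nat.card_eq_fintype_card, Fintype.card_subtype]
      simp only [hf]
      rw [Finset.prod_ite]
      simp
    rw [hp]
    exact Real.rpow_le_rpow_of_exponent_ge hs0 hs.le h.le
  rw [hcard]
  calc (B.card : ℝ) * s ^ a = ∑ x ∈ B, s ^ a := by simp
    _ ≤ ∑ x ∈ B, ∏ j, f j (x j) := Finset.sum_le_sum hx
    _ ≤ ∑ x ∈ P, ∏ j, f j (x j) :=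
        Finset.sum_le_sum_of_subset_of_nonneg (Finset.filter_subset _ _)
          (fun x _ _ => Finset.prod_nonneg (fun j _ => hf0 _ _))
    _ = ∏ j : Fin k, ∑ y ∈ Finset.Icc 1 (k - (j : ℕ)), f j y := by
        rw [Finset.prod_univ_sum]
    _ ≤ ∏ j : Fin k, (((k - (j : ℕ) : ℕ) : ℝ) *
          (if j ∈ W then Real.exp (-((1 - q) * (1 - s))) else 1)) := by
        refine Finset.prod_le_prod (fun j _ => Finset.sum_nonneg (fun y _ => hf0 _ _)) ?_
        intro j _
        have hj := j.2
        have hc : (k : ℝ) - (j : ℕ) = ((k - (j : ℕ) : ℕ) : ℝ) := by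
          rw [Nat.cast_sub hj.le]
        by_cases hjW : j ∈ W
        · simp only [hf, hjW, true_and, if_true]
          rw [hc]
          refine (aux_sum _ (by omega) q s hq hs.le).trans ?_
          refine mul_le_mul_of_nonneg_left ?_ (by positivity)
          have := Real.add_one_le_exp (-((1 - q) * (1 - s)))
          linarith
        · simp [hf, hjW]
    _ = _ := by
        rw [Finset.prod_mul_distrib, aux_fact, Finset.prod_ite]
        rw [Finset.prod_const, Finset.prod_const_one, mul_one, ← Real.exp_nat_mul,
          Finset.filter_univ_mem, mul_comm (W.card : ℝ)]

/-- Concentration for the variables `X_j` (uniform on `{1,…,k−j+1}`): with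
`c = (ε*/M)²/2`, for each `m₁, m₂ ∈ {1,…,M−1}` and all large `k`, the number of tuples
`(x_1,…,x_k)` with `x_j ∈ {1,…,k−j+1}` for which
`|{j : m₁k/M < j ≤ (m₁+1)k/M and x_j/(k−j+1) > m₂/M}| < (1−ε*)(1−m₂/M)k/M`
is at most `exp(−ck)·k!`. (Positions are indexed by `j : Fin k`, with `j : Fin k`
representing the index `j+1 ∈ {1,…,k}`, so `x_j ∈ {1,…,k−j}` and
`k − (j+1) + 1 = k − j`.) -/
theorem concentration_X_fraction (ε : ℝ) (hε : 0 < ε) (M : ℕ) (hM : 2 ≤ M) :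
    ∀ m₁ ∈ Finset.Icc 1 (M - 1), ∀ m₂ ∈ Finset.Icc 1 (M - 1), ∃ K : ℕ, ∀ k : ℕ, K ≤ k →
      (Nat.card {x : Fin k → ℕ // (∀ j : Fin k, 1 ≤ x j ∧ x j ≤ k - (j : ℕ)) ∧
          (Nat.card {j : Fin k //
              ((m₁ : ℝ) * k / M < (j : ℕ) + 1 ∧ ((j : ℕ) + 1 : ℝ) ≤ ((m₁ : ℝ) + 1) * k / M) ∧
              (m₂ : ℝ) / M < (x j : ℝ) / ((k : ℝ) - (j : ℕ))} : ℝ) <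
            (1 - ε) * (1 - (m₂ : ℝ) / M) * k / M} : ℝ) ≤
        Real.exp (-((ε / M)^2 / 2) * k) * (Nat.factorial k) := by
  intro m₁ hm₁ m₂ hm₂
  rw [Finset.mem_Icc] at hm₁ hm₂
  have hM0 : 0 < M := by omega
  have hM' : (0 : ℝ) < M := by exact_mod_cast hM0
  have hm2 : (m₂ : ℝ) + 1 ≤ M := by exact_mod_cast (by omega : m₂ + 1 ≤ M)
  have hq0 : (0 : ℝ) ≤ (m₂ : ℝ) / M := by positivity
  have hp : 1 / (M : ℝ) ≤ 1 - (m₂ : ℝ) / M := by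
    rw [le_sub_iff_add_le, ← add_div, div_le_one hM']
    linarith
  have hpos : 0 < 1 / (M : ℝ) := by positivity
  set q := (m₂ : ℝ) / M with hq
  rcases le_or_gt 1 ε with h1 | h1
  · refine ⟨0, fun k _ => ?_⟩
    have hneg : (1 - ε) * (1 - q) * k / M ≤ 0 := by
      apply div_nonpos_of_nonpos_of_nonneg _ hM'.le
      apply mul_nonpos_of_nonpos_of_nonneg _ (by positivity)
      exact mul_nonpos_of_nonpos_of_nonneg (by linarith) (by linarith)
    rw [Nat.card_eq_zero.2]
    · simp; positivity
    · left
      constructor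
      rintro ⟨x, _, hx⟩
      exact absurd (hx.trans_le hneg) (not_lt.2 (Nat.cast_nonneg _))
  have hd := aux_log ε hε h1
  set d := ((1 - ε) * Real.log (1 - ε) + ε) - ε ^ 2 / 2 with hdd
  refine ⟨⌈M * ε / d⌉₊, fun k hk => ?_⟩
  have hk' : M * ε ≤ k * d := (div_le_iff₀ hd).1 (Nat.ceil_le.1 hk)
  have hW := aux_window k M m₁ hM0 (by omega)
  set W := Finset.univ.filter (fun j : Fin k =>
      (m₁ : ℝ) * k / M < (j : ℕ) + 1 ∧ ((j : ℕ) + 1 : ℝ) ≤ ((m₁ : ℝ) + 1) * k / M) with hWd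
  have hmain := aux_main k W q (1 - ε) ((1 - ε) * (1 - q) * k / M) hq0 (by linarith)
    (by linarith) (by linarith)
  simp only [hWd, Finset.mem_filter, Finset.mem_univ, true_and] at hmain
  rw [← hWd] at hmain
  have hs : 0 < (1 - ε) ^ ((1 - ε) * (1 - q) * k / M) := Real.rpow_pos_of_pos (by linarith) _
  refine le_of_mul_le_mul_right (hmain.trans ?_) hs
  rw [Real.rpow_def_of_pos (by linarith), mul_right_comm, mul_comm, ← Real.exp_add]
  refine mul_le_mul_of_nonneg_right (Real.exp_le_exp.2 ?_) (by positivity)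
  -- exponent estimate
  set p := 1 - q with hpd
  have hp0 : 0 < p := by linarith
  have e1 : p * ε * ((k : ℝ) / M - 1) ≤ p * ε * W.card :=
    mul_le_mul_of_nonneg_left hW (by positivity)
  have e2 : p * ε ≤ p * (k / M * d) := by
    apply mul_le_mul_of_nonneg_left _ hp0.le
    rw [div_mul_eq_mul_div, le_div_iff₀ hM']
    linarith
  have e3 : 1 / (M : ℝ) * (k / M * (ε ^ 2 / 2)) ≤ p * (k / M * (ε ^ 2 / 2)) :=
    mul_le_mul_of_nonneg_right hp (by positivity)
  have e4 : -((ε / M) ^ 2 / 2) * k = -(1 / (M : ℝ) * (k / M * (ε ^ 2 / 2))) := by ring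
  have e5 : Real.log (1 - ε) * ((1 - ε) * p * k / M) =
      p * (k / M * d) + p * (k / M * (ε ^ 2 / 2)) - p * ε * (k / M) := by
    rw [hdd]; ring
  rw [e4, e5]
  have e6 : -(p * (1 - (1 - ε))) * (W.card : ℝ) = -(p * ε * W.card) := by ring
  rw [e6]
  linarith
end
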